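/- arXiv:math/9911142 — 13 statements merged into one kernel-verified Lean document; each statement's English description precedes it below -/
import Mathlib

section
/- If a ∈ L_p, then there exists u ∈ K_p with a ∼₁ u; explicitly, a*a is invertible in pAp, and if c denotes the inverse of (a*a)^{1/2} in pAp, then u = ac belongs to K_p and a ∼₁ u. -/
/-- If `a ∈ L_p`, then `a*a` is invertible in `pAp`, and if `c` denotes the inverse
of `(a*a)^{1/2}` in `pAp`, then `u = a*c` belongs to `K_p` and `a ∼₁ u`. -/
theorem stmt_1 {A : Type*} [CStarAlgebra A] [PartialOrder A] [StarOrderedRing A]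
    (p : A) (hp_star : p = star p) (hp_idem : p * p = p)
    (a : A) (ha : a = a * p) (haL : ∃ b : A, b = p * b ∧ b * a = p) :
    (∃ k : A, k = p * k * p ∧ (star a * a) * k = p ∧ k * (star a * a) = p) ∧
    ∀ c : A, c = p * c * p → CFC.sqrt (star a * a) * c = p → c * CFC.sqrt (star a * a) = p →
      ((a * c = (a * c) * p ∧ star (a * c) * (a * c) = p) ∧
        ∃ h : A, h = p * h * p ∧ (∃ k : A, k = p * k * p ∧ h * k = p ∧ k * h = p) ∧
          a * h = a * c) := by
  have h1p : 0 ≤ 1 - p := by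
    have : 1 - p = star (1 - p) * (1 - p) := by
      rw [star_sub, star_one, ← hp_star]
      simp [mul_sub, sub_mul, hp_idem]
    rw [this]; exact star_mul_self_nonneg _
  have hpa : p * star a = star a := by
    have := congrArg star ha
    rw [star_mul, ← hp_star] at this
    exact this.symm
  refine ⟨?_, ?_⟩
  · obtain ⟨b, hb, hba⟩ := haL
    have hle : p ≤ ‖star b * b‖ • (star a * a) := by
      have h := CStarAlgebra.star_left_conjugate_le_norm_smul (a := a) (b := star b * b)
        (IsSelfAdjoint.star_mul_self b)
      have e : star a * (star b * b) * a = p := by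
        calc star a * (star b * b) * a = star (b * a) * (b * a) := by
              simp only [star_mul, mul_assoc]
          _ = p := by rw [hba, ← hp_star, hp_idem]
      rwa [e] at h
    have hT : IsUnit (star a * a + (1 - p)) := by
      set M : ℝ := ‖star b * b‖ + 1 with hM
      have hM0 : 0 < M := by positivity
      have h1 : (1 : A) ≤ M • (star a * a + (1 - p)) := by
        have e : M • (star a * a + (1 - p)) - 1 = (‖star b * b‖ • (star a * a) - p)
            + star a * a + ‖star b * b‖ • (1 - p) := by
          rw [hM]; module
        rw [← sub_nonneg, e]
        exact add_nonneg (add_nonneg (sub_nonneg.2 hle) (star_mul_self_nonneg a))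
          (smul_nonneg (norm_nonneg _) h1p)
      have h2 : IsUnit (M • (star a * a + (1 - p))) :=
        CStarAlgebra.isUnit_of_le 1 h1 isStrictlyPositive_one
      have := h2.smul (Units.mk0 M⁻¹ (inv_ne_zero hM0.ne'))
      rwa [Units.smul_mk0, inv_smul_smul₀ hM0.ne'] at this
    obtain ⟨T, hT⟩ := hT
    have hTp : (T : A) * p = star a * a := by
      rw [hT, add_mul, sub_mul, one_mul, hp_idem, sub_self, add_zero, mul_assoc, ← ha]
    have hpT : p * (T : A) = star a * a := by
      rw [hT, mul_add, mul_sub, mul_one, hp_idem, sub_self, add_zero, ← mul_assoc, hpa]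
    have hc : p * (↑T⁻¹ : A) = ↑T⁻¹ * p := by
      rw [Units.mul_inv_eq_iff_eq_mul, mul_assoc, hpT, ← hTp, Units.inv_mul_cancel_left]
    have hk : p * (↑T⁻¹ : A) * p = ↑T⁻¹ * p := by rw [hc, mul_assoc, hp_idem]
    refine ⟨p * ↑T⁻¹ * p, ?_, ?_, ?_⟩
    · simp only [mul_assoc, hp_idem]
      simp only [← mul_assoc, hp_idem]
    · rw [hk, ← hpT, mul_assoc, Units.mul_inv_cancel_left, hp_idem]
    · rw [hk, ← hc, ← hTp, mul_assoc, Units.inv_mul_cancel_left, hp_idem]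
  · intro c hc h1 h2
    have hcp : c * p = c := by rw [hc, mul_assoc, hp_idem]
    have hpc : p * c = c := by rw [hc, ← mul_assoc, ← mul_assoc, hp_idem]
    have hs : CFC.sqrt (star a * a) * CFC.sqrt (star a * a) = star a * a :=
      CFC.sqrt_mul_sqrt_self _ (star_mul_self_nonneg a)
    have hsa : star (CFC.sqrt (star a * a)) = CFC.sqrt (star a * a) :=
      (IsSelfAdjoint.of_nonneg (CFC.sqrt_nonneg _)).star_eq
    refine ⟨⟨by rw [mul_assoc, hcp], ?_⟩, c, hc, ⟨p * CFC.sqrt (star a * a) * p, ?_, ?_, ?_⟩, rfl⟩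
    · calc star (a * c) * (a * c) = star c * (star a * a) * c := by
            simp only [star_mul, mul_assoc]
        _ = star (CFC.sqrt (star a * a) * c) * (CFC.sqrt (star a * a) * c) := by
            rw [star_mul, hsa, ← hs]
            simp only [hs, mul_assoc]
            rw [← mul_assoc (CFC.sqrt _) (CFC.sqrt _), hs, mul_assoc]
        _ = p := by rw [h1, ← hp_star, hp_idem]
    · simp only [mul_assoc, hp_idem]
      simp only [← mul_assoc, hp_idem]
    · rw [← mul_assoc, ← mul_assoc, hcp, h2, hp_idem]
    · rw [mul_assoc, hpc, mul_assoc, h1, hp_idem]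
end

section
/- If g ∈ A is invertible, then there exists a unitary v ∈ A (v*v = vv* = 1) such that gp ∼₁ vp, i.e. there exists h ∈ pAp invertible in pAp with (gp)h = vp. -/
/-- Invertibility of the triangular element `a p + (1 - p)` for strictly positive `a`. -/
theorem aux_tri {A : Type*} [CStarAlgebra A] [PartialOrder A] [StarOrderedRing A]
    (p : A) (hs : star p = p) (hp : p * p = p) (a : A) (ha : IsStrictlyPositive a) :
    IsUnit (a * p + (1 - p)) := by
  nontriviality A
  obtain ⟨r, hr, hra⟩ : ∃ r > 0, (algebraMap ℝ A) r ≤ a :=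
    (CFC.exists_pos_algebraMap_le_iff ha.isSelfAdjoint).2 fun x hx ↦ ha.spectrum_pos hx
  set R := algebraMap ℝ A r with hR
  have hRp : R * p = p * R := Algebra.commutes r p
  have h1 : p * R * p ≤ p * a * p := by
    have := star_left_conjugate_le_conjugate hra p
    rwa [hs] at this
  have h2 : R ≤ p * a * p + R * (1 - p) := by
    have e : R = p * R * p + R * (1 - p) := by
      rw [← hRp, mul_assoc, hp]; noncomm_ring
    calc R = p * R * p + R * (1 - p) := e
      _ ≤ _ := add_le_add_left h1 _
  have hRpos : IsStrictlyPositive R := 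
    ⟨algebraMap_nonneg A hr.le, (IsUnit.mk0 r hr.ne').map (algebraMap ℝ A)⟩
  obtain ⟨c, hc⟩ := CStarAlgebra.isUnit_of_le R h2 hRpos
  have hpc : p * (c : A) = p * a * p := by
    rw [hc, mul_add, ← mul_assoc, ← mul_assoc, hp, ← mul_assoc, ← hRp, mul_assoc R, mul_sub, hp]
    simp
  have hcp : (c : A) * p = p * a * p := by
    rw [hc, add_mul, mul_assoc _ p p, hp, mul_assoc R, sub_mul, hp]
    simp
  have hcom : Commute (c : A) p := hcp.trans hpc.symm
  have hcom' : (↑c⁻¹ : A) * p = p * ↑c⁻¹ := hcom.units_inv_left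
  set d : A := ↑c⁻¹ with hd
  have e1 : p * a * p * d = p := by rw [← hpc, mul_assoc, Units.mul_inv, mul_one]
  have e2 : d * (p * a * p) = p := by rw [← hcp, ← mul_assoc, Units.inv_mul, one_mul]
  have l : (a * p + (1 - p)) * (p * d + (1 - p) - (1 - p) * a * p * d) = 1 := by
    have : (a * p + (1 - p)) * (p * d + (1 - p) - (1 - p) * a * p * d)
      = a * (p * p) * d + a * (p - p * p) - a * (p - p * p) * a * p * d
        + (p - p * p) * d + (1 - p - p + p * p) - (1 - p - p + p * p) * a * p * d := by
      noncomm_ring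
    rw [this, hp]
    have : a * p * d + a * (p - p) - a * (p - p) * a * p * d
        + (p - p) * d + (1 - p - p + p) - (1 - p - p + p) * a * p * d
        = p * a * p * d + 1 - p := by noncomm_ring
    rw [this, e1]; abel
  have l' : (p * d + (1 - p) - (1 - p) * a * p * d) * (a * p + (1 - p)) = 1 := by
    have e3 : p * d * a * p = p := by
      calc p * d * a * p = (p * p) * d * a * p := by rw [hp]
        _ = p * (d * p) * a * p := by rw [hcom']; simp only [mul_assoc]
        _ = p * (d * (p * a * p)) := by
          simp only [mul_assoc]
        _ = p := by rw [e2, hp]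
    have e4 : p * d * (1 - p) = 0 := by
      rw [← hcom', mul_assoc, mul_sub, hp]; simp
    have : (p * d + (1 - p) - (1 - p) * a * p * d) * (a * p + (1 - p))
      = p * d * a * p + p * d * (1 - p) + (1 - p) * a * p + (1 - p - p + p * p)
        - (1 - p) * a * (p * d * a * p) - (1 - p) * a * (p * d * (1 - p)) := by
      noncomm_ring
    rw [this, e3, e4, hp]
    noncomm_ring
  exact ⟨⟨_, _, l, l'⟩, rfl⟩

/-- If `g ∈ A` is invertible, then there exists a unitary `v ∈ A` such that
`gp ∼₁ vp`, i.e. there exists `h ∈ pAp` invertible in `pAp` with `(gp)h = vp`. -/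
theorem stmt_2 {A : Type*} [CStarAlgebra A]
    (p : A) (hp_star : p = star p) (hp_idem : p * p = p)
    (g : A) (hg : IsUnit g) :
    ∃ v h : A, star v * v = 1 ∧ v * star v = 1 ∧
      h = p * h * p ∧ (∃ k : A, k = p * k * p ∧ h * k = p ∧ k * h = p) ∧
      (g * p) * h = v * p := by
  let : PartialOrder A := CStarAlgebra.spectralOrder A
  have : StarOrderedRing A := CStarAlgebra.spectralOrderedRing A
  have hs : star p = p := hp_star.symm
  obtain ⟨G, rfl⟩ := hg
  have hpos : IsStrictlyPositive (star (G : A) * G) :=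
    ⟨star_mul_self_nonneg _, (G.isUnit.star).mul G.isUnit⟩
  have ht := aux_tri p hs hp_idem _ hpos
  set i : A := ↑G⁻¹ with hi
  have gi : (G : A) * i = 1 := Units.mul_inv G
  have ig : i * (G : A) = 1 := Units.inv_mul G
  have sgi : star i * star (G : A) = 1 := by rw [← star_mul, gi, star_one]
  have sig : star (G : A) * star i = 1 := by rw [← star_mul, ig, star_one]
  obtain ⟨x, hx⟩ : ∃ x, x = (G : A) * p + star i * (1 - p) := ⟨_, rfl⟩
  have hxu : IsUnit x := by
    have : x = star i * (star (G : A) * G * p + (1 - p)) := by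
      rw [mul_add, ← mul_assoc, ← mul_assoc, sgi, one_mul, hx]
    rw [this]
    exact (Units.isUnit G⁻¹).star.mul ht
  obtain ⟨b, hb⟩ : ∃ b, b = star x * x := ⟨_, rfl⟩
  have hb0 : 0 ≤ b := hb ▸ star_mul_self_nonneg _
  have hbu : IsUnit b := hb ▸ hxu.star.mul hxu
  have hxp : x * p = G * p := by
    rw [hx, add_mul, mul_assoc, hp_idem, mul_assoc, sub_mul, hp_idem]; simp
  have hbe : b = p * (star (G : A) * G) * p + (1 - p) * (i * star i) * (1 - p) := by
    have h1 : b = p * (star (G : A) * G) * p + p * (star (G : A) * star i) * (1 - p)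
        + (1 - p) * (i * (G : A)) * p + (1 - p) * (i * star i) * (1 - p) := by
      rw [hb, hx]
      simp only [star_add, star_mul, star_sub, star_one, hs, star_star]
      noncomm_ring
    have h2 : p * (1 - p) = 0 := by rw [mul_sub, hp_idem]; simp
    have h3 : (1 - p) * p = 0 := by rw [sub_mul, hp_idem]; simp
    rw [h1, sig, ig, mul_one, mul_one, h2, h3]; simp
  have hbp : Commute b p := by
    have h2 : p * (1 - p) = 0 := by rw [mul_sub, hp_idem]; simp
    have h3 : (1 - p) * p = 0 := by rw [sub_mul, hp_idem]; simp
    have e1 : b * p = p * (star (G : A) * G) * p := by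
      rw [hbe, add_mul, mul_assoc _ p p, hp_idem, mul_assoc _ (1 - p) p, h3]; simp
    have e2 : p * b = p * (star (G : A) * G) * p := by
      rw [hbe, mul_add]
      simp only [← mul_assoc]
      rw [hp_idem, h2]; simp
    exact e1.trans e2.symm
  have hsp : Commute (CFC.sqrt b) p := hbp.cfcₙ_nnreal _
  obtain ⟨s, hsu⟩ := (CFC.isUnit_sqrt_iff b hb0).2 hbu
  have hss : (s : A) * s = b := by rw [hsu]; exact CFC.sqrt_mul_sqrt_self b hb0
  have hsa : star (s : A) = s := by
    rw [hsu]; exact (IsSelfAdjoint.of_nonneg (CFC.sqrt_nonneg b)).star_eq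
  rw [← hsu] at hsp
  have htp : (↑s⁻¹ : A) * p = p * ↑s⁻¹ := hsp.units_inv_left
  obtain ⟨t, htd⟩ : ∃ t : A, t = ↑s⁻¹ := ⟨_, rfl⟩
  rw [← htd] at htp
  have hst : (s : A) * t = 1 := by rw [htd]; simp
  have hts : t * (s : A) = 1 := by rw [htd]; simp
  have hta : star t = t := by
    have : star t * s = 1 := by rw [← hsa, ← star_mul, hst, star_one]
    calc star t = star t * (s * t) := by rw [hst, mul_one]
      _ = t := by rw [← mul_assoc, this, one_mul]
  have hvv : star (x * t) * (x * t) = 1 := by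
    calc star (x * t) * (x * t) = t * (star x * x) * t := by
          rw [star_mul, hta]; simp only [mul_assoc]
      _ = (t * s) * (s * t) := by rw [← hb, ← hss]; simp only [mul_assoc]
      _ = 1 := by rw [hts, hst, mul_one]
  have hvu : IsUnit (x * t) := hxu.mul (htd ▸ Units.isUnit _)
  have hsp' : (s : A) * p = p * s := hsp
  refine ⟨x * t, p * t, hvv, ?_, ?_, ⟨p * s, ?_, ?_, ?_⟩, ?_⟩
  · obtain ⟨V, hV⟩ := hvu
    rw [← hV] at hvv ⊢
    have e : star (V : A) = ↑V⁻¹ := by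
      rw [← mul_one (star (V : A)), ← Units.mul_inv V, ← mul_assoc, hvv, one_mul]
    rw [e, Units.mul_inv]
  · rw [← mul_assoc, hp_idem, mul_assoc, htp, ← mul_assoc, hp_idem]
  · rw [← mul_assoc, hp_idem, mul_assoc, hsp', ← mul_assoc, hp_idem]
  · rw [← htp, mul_assoc, ← mul_assoc p, hp_idem, ← mul_assoc, htp, mul_assoc, hts, mul_one]
  · rw [← hsp', mul_assoc, ← mul_assoc p, hp_idem, ← mul_assoc, hsp', mul_assoc, hst, mul_one]
  · rw [mul_assoc x, htp, ← mul_assoc, ← mul_assoc, hxp, mul_assoc (G : A), hp_idem]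
end

section
/- Let v ∈ K_p be such that pvp is invertible in the corner algebra pAp. Then there exists a unitary u ∈ A (u*u = uu* = 1) with v = up. -/
/-- Polar decomposition step. -/
theorem polar_aux {A : Type*} [CStarAlgebra A] (p y z : A) (hp_star : star p = p)
    (hp_idem : p * p = p) (h1 : y * z = 1) (h2 : z * y = 1) (hyp : star y * y * p = p) :
    ∃ u : A, star u * u = 1 ∧ u * star u = 1 ∧ y * p = u * p := by
  let : PartialOrder A := CStarAlgebra.spectralOrder A
  have : StarOrderedRing A := CStarAlgebra.spectralOrderedRing A
  have hb : (0:A) ≤ star y * y := star_mul_self_nonneg y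
  have hpy : p * (star y * y) = p := by
    have := congrArg star hyp
    simpa [hp_star, mul_assoc] using this
  obtain ⟨h, hh⟩ : ∃ h, h = CFC.sqrt (star y * y) := ⟨_, rfl⟩
  have hh0 : 0 ≤ h := hh ▸ CFC.sqrt_nonneg _
  have hsq : h * h = star y * y := by rw [hh]; exact CFC.sqrt_mul_sqrt_self _ hb
  have hs : star h = h := (IsSelfAdjoint.of_nonneg hh0).star_eq
  have hc : Commute h p := by
    have hc0 : Commute (star y * y) p := by rw [commute_iff_eq, hyp, hpy]
    rw [hh, CFC.sqrt]
    exact hc0.cfcₙ_nnreal _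
  have hc' : h * p = p * h := hc
  have hpp : (0:A) ≤ p := by
    have := star_mul_self_nonneg p
    rwa [hp_star, hp_idem] at this
  have hhp : h * p = p := by
    have e1 : CFC.sqrt p = p := CFC.sqrt_unique hp_idem hpp
    have e2 : CFC.sqrt p = h * p := by
      apply CFC.sqrt_unique
      · calc h * p * (h * p) = h * (p * h) * p := by noncomm_ring
          _ = (h * h) * (p * p) := by rw [← hc']; noncomm_ring
          _ = p := by rw [hp_idem, hsq, hyp]
      · have := star_left_conjugate_nonneg hh0 p
        rwa [hp_star, ← hc', mul_assoc, hp_idem] at this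
    rw [← e2, e1]
  have hyz' : star z * star y = 1 := by rw [← star_mul, h1, star_one]
  have hzy' : star y * star z = 1 := by rw [← star_mul, h2, star_one]
  -- inverse of h
  obtain ⟨g, hg⟩ : ∃ g, g = z * star z * h := ⟨_, rfl⟩
  have gh : g * h = 1 := by
    calc g * h = z * star z * (h * h) := by rw [hg]; noncomm_ring
      _ = z * (star z * star y) * y := by rw [hsq]; noncomm_ring
      _ = 1 := by rw [hyz', mul_one, h2]
  have hg' : h * (h * (z * star z)) = 1 := by
    calc h * (h * (z * star z)) = (h * h) * (z * star z) := by noncomm_ring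
      _ = star y * (y * z) * star z := by rw [hsq]; noncomm_ring
      _ = 1 := by rw [h1, mul_one, hzy']
  have hgg : g = h * (z * star z) := left_inv_eq_right_inv gh hg'
  have hg1 : h * g = 1 := by rw [hgg, hg']
  have gs : star g = g := by
    rw [hgg, star_mul, hs, star_mul, star_star, ← hg, hgg]
  refine ⟨y * g, ?_, ?_, ?_⟩
  · calc star (y * g) * (y * g) = g * (star y * y) * g := by rw [star_mul, gs]; noncomm_ring
      _ = (g * h) * (h * g) := by rw [← hsq]; noncomm_ring
      _ = 1 := by rw [gh, hg1, mul_one]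
  · have hgsq : g * g = z * star z := by
      calc g * g = g * (h * (z * star z)) := by rw [← hgg]
        _ = (g * h) * (z * star z) := by noncomm_ring
        _ = _ := by rw [gh, one_mul]
    calc (y * g) * star (y * g) = y * (g * g) * star y := by rw [star_mul, gs]; noncomm_ring
      _ = (y * z) * (star z * star y) := by rw [hgsq]; noncomm_ring
      _ = 1 := by rw [h1, hyz', mul_one]
  · have : g * p = p := by
      calc g * p = g * (h * p) := by rw [hhp]
        _ = (g * h) * p := by noncomm_ring
        _ = p := by rw [gh, one_mul]
    rw [mul_assoc, this]

/-- Let `v ∈ K_p` be such that `pvp` is invertible in the corner algebra `pAp`.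
Then there exists a unitary `u ∈ A` with `v = up`. -/
theorem stmt_7 {A : Type*} [CStarAlgebra A]
    (p : A) (hp_star : p = star p) (hp_idem : p * p = p)
    (v : A) (hv : v = v * p) (hv' : star v * v = p)
    (hinv : ∃ k : A, k = p * k * p ∧ (p * v * p) * k = p ∧ k * (p * v * p) = p) :
    ∃ u : A, star u * u = 1 ∧ u * star u = 1 ∧ v = u * p := by
  obtain ⟨k, hk, hk1, hk2⟩ := hinv
  have vp : v * p = v := hv.symm
  have ps : star p = p := hp_star.symm
  have pk : p * k = k := by rw [hk]; simp only [← mul_assoc, hp_idem]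
  have kp : k * p = k := by rw [hk]; simp only [mul_assoc, hp_idem]
  have pvk : p * v * k = p := by rwa [mul_assoc p v p, vp] at hk1
  have kv : k * v = p := by rwa [mul_assoc p v p, vp, ← mul_assoc, kp] at hk2
  have pvs : p * star v = star v := by rw [← ps, ← star_mul, vp]
  have vvk : v * v * k = v := by
    calc v * v * k = (v * p) * v * k := by rw [vp]
      _ = v * (p * v * k) := by noncomm_ring
      _ = v := by rw [pvk, vp]
  have ts : (v + 1 - p) * (1 + k - v * k) = 1 := by
    have : (v + 1 - p) * (1 + k - v * k)
      = v + 1 - p + k - p * k + p * v * k - v * v * k := by noncomm_ring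
    rw [this, pk, pvk, vvk]; abel
  have st : (1 + k - v * k) * (v + 1 - p) = 1 := by
    have : (1 + k - v * k) * (v + 1 - p)
      = v + 1 - p + k * v + (k - k * p) - v * (k * v) - v * (k - k * p) := by noncomm_ring
    rw [this, kv, kp, vp]; simp
  obtain ⟨d, hd⟩ : ∃ d, d = star v * (1 - p) := ⟨_, rfl⟩
  have pd : p * d = d := by rw [hd, ← mul_assoc, pvs]
  have dp : d * p = 0 := by rw [hd, mul_assoc, sub_mul, one_mul, hp_idem, sub_self, mul_zero]
  have dd : d * d = 0 := by
    calc d * d = d * (p * d) := by rw [pd]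
      _ = (d * p) * d := by noncomm_ring
      _ = 0 := by rw [dp, zero_mul]
  have d1 : (1 - d) * (1 + d) = 1 := by
    have : (1 - d) * (1 + d) = 1 - d * d := by noncomm_ring
    rw [this, dd, sub_zero]
  have d2 : (1 + d) * (1 - d) = 1 := by
    have : (1 + d) * (1 - d) = 1 - d * d := by noncomm_ring
    rw [this, dd, sub_zero]
  obtain ⟨y, hy⟩ : ∃ y, y = (v + 1 - p) * (1 - d) := ⟨_, rfl⟩
  have yp : y * p = v := by
    have : y * p = v * p + p - p * p - (v + 1 - p) * (d * p) := by rw [hy]; noncomm_ring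
    rw [this, dp, vp, hp_idem]; simp
  have vy : star v * y = p := by
    have : star v * y = star v * v + star v * (1 - p) - (star v * v) * d
      - star v * (d - p * d) := by rw [hy]; noncomm_ring
    rw [this, hv', pd, ← hd]; simp
  have ysv : star y * v = p := by
    have := congrArg star vy
    simpa [ps] using this
  obtain ⟨u, hu1, hu2, hu3⟩ := polar_aux p y ((1 + d) * (1 + k - v * k)) ps hp_idem
    (by
      calc y * ((1 + d) * (1 + k - v * k))
          = (v + 1 - p) * ((1 - d) * (1 + d)) * (1 + k - v * k) := by
            rw [hy]; simp only [mul_assoc]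
        _ = 1 := by rw [d1, mul_one, ts])
    (by
      calc (1 + d) * (1 + k - v * k) * y
          = (1 + d) * ((1 + k - v * k) * (v + 1 - p)) * (1 - d) := by
            rw [hy]; simp only [mul_assoc]
        _ = 1 := by rw [st, mul_one, d2])
    (by rw [mul_assoc, yp, ysv])
  exact ⟨u, hu1, hu2, by rw [← hu3, yp]⟩
end

section
/- For v ∈ K_p, the element pvp is invertible in the corner algebra pAp if and only if ‖vv* − p‖ < 1. -/
lemma aux_inv {A : Type*} [CStarAlgebra A] (p a : A) (hp : p * p = p) (h1 : p * a = a)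
    (h2 : a * p = a) (h : ‖p - a‖ < 1) : ∃ u : A, a * u = p ∧ u * a = p ∧ p * u = u ∧ u * p = u := by
  have hu : IsUnit (1 - (p - a)) := isUnit_one_sub_of_norm_lt_one h
  obtain ⟨⟨x, y, hxy, hyx⟩, hx⟩ := hu
  simp only at hx
  have e1 : p * x = a := by rw [hx]; simp only [mul_sub, mul_one, hp, h1]; abel
  have e2 : x * p = a := by rw [hx]; simp only [sub_mul, one_mul, hp, h2]; abel
  have c : p * y = y * p := by
    calc p * y = (y * x) * (p * y) := by rw [hyx, one_mul]
      _ = y * (x * p) * y := by noncomm_ring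
      _ = y * p * (x * y) := by rw [e2, ← e1]; noncomm_ring
      _ = y * p := by rw [hxy, mul_one]
  refine ⟨y * p, ?_, ?_, ?_, ?_⟩
  · rw [← c, ← mul_assoc, h2, ← e1, mul_assoc, hxy, mul_one]
  · rw [mul_assoc, h1, ← e2, ← mul_assoc, hyx, one_mul]
  · rw [← mul_assoc, c, mul_assoc, hp]
  · rw [mul_assoc, hp]

lemma aux_fwd {A : Type*} [CStarAlgebra A] [PartialOrder A] [StarOrderedRing A]
    (p : A) (hs : star p = p) (hp : p * p = p)
    (v : A) (hv : v * p = v) (hv' : star v * v = p) (k : A)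
    (h1 : p * v * k = p) (h2 : k * (p * v) = p) : ‖v * star v - p‖ < 1 := by
  set M : ℝ := ‖k‖ ^ 2 + 1 with hM
  have hM1 : 1 ≤ M := by rw [hM]; nlinarith [sq_nonneg ‖k‖]
  have hM0 : 0 < M := by linarith
  set c : ℝ := 1 - M⁻¹ with hc
  have hc0 : 0 ≤ c := by rw [hc]; linarith [inv_le_one_of_one_le₀ hM1]
  have hc1 : c < 1 := by rw [hc]; linarith [inv_pos.2 hM0]
  have hsv : p * star v = star v := by
    have := congrArg star hv
    rwa [star_mul, hs] at this
  have hp1 : p ≤ 1 := by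
    have : (0 : A) ≤ star (1 - p) * (1 - p) := star_mul_self_nonneg _
    rw [← sub_nonneg]
    convert this using 1
    simp [hs, mul_sub, sub_mul, hp]
  have key : ∀ h j : A, j * h = p → ‖j‖ ^ 2 ≤ M → p - star h * h ≤ c • p := by
    intro h j hj hjM
    have a1 : star j * j ≤ M • (1 : A) := by
      refine le_trans (CStarAlgebra.star_mul_le_algebraMap_norm_sq) ?_
      rw [Algebra.algebraMap_eq_smul_one]
      exact smul_le_smul_of_nonneg_right hjM zero_le_one
    have a2 := star_left_conjugate_le_conjugate a1 h
    have a3 : star h * (star j * j) * h = p := by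
      calc _ = star (j * h) * (j * h) := by rw [star_mul]; noncomm_ring
        _ = p := by rw [hj, hs, hp]
    rw [a3] at a2
    have a4 : M⁻¹ • p ≤ star h * h := by
      have := smul_le_smul_of_nonneg_left a2 (inv_nonneg.2 hM0.le)
      simpa [smul_smul, hM0.ne'] using this
    rw [hc, sub_smul, one_smul]
    exact sub_le_sub_left a4 p
  have k1 : p - p * v * star v * p ≤ c • p := by
    have := key (star (p * v)) (star k) (by rw [← star_mul, h1, hs]) (by rw [norm_star, hM]; linarith)
    simpa [hs, mul_assoc] using this
  have k2 : p - star v * p * v ≤ c • p := by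
    have := key (p * v) k h2 (by rw [hM]; linarith)
    have e : star (p * v) * (p * v) = star v * p * v := by
      rw [star_mul, hs]
      calc _ = star v * (p * p) * v := by noncomm_ring
        _ = _ := by rw [hp]
    rwa [e] at this
  have hw : star ((1 - p) * v) * ((1 - p) * v) = p - star v * p * v := by
    have : (1 - p) * (1 - p) = 1 - p := by simp [mul_sub, sub_mul, hp]
    calc _ = star v * ((1 - p) * (1 - p)) * v := by simp [hs]; noncomm_ring
      _ = star v * v - star v * p * v := by rw [this]; noncomm_ring
      _ = _ := by rw [hv']
  have hcp : c • p ≤ c • (1 : A) := smul_le_smul_of_nonneg_left hp1 hc0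
  have hwn : ‖(1 - p) * v‖ ^ 2 ≤ c := by
    rw [sq, ← CStarRing.norm_star_mul_self, CStarAlgebra.norm_le_iff_le_algebraMap _ hc0 (star_mul_self_nonneg _), hw,
      Algebra.algebraMap_eq_smul_one]
    exact k2.trans hcp
  have hy : (1 - p) * v * star v * (1 - p) ≤ c • (1 - p) := by
    have b1 : ((1 - p) * v) * star ((1 - p) * v) ≤ c • (1 : A) := by
      rw [← Algebra.algebraMap_eq_smul_one, ← CStarAlgebra.norm_le_iff_le_algebraMap _ hc0 (mul_star_self_nonneg _),
        CStarRing.norm_self_mul_star, ← sq]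
      exact hwn
    have b2 := star_left_conjugate_le_conjugate b1 (1 - p)
    have q : (1 - p) * (1 - p) = 1 - p := by simp [mul_sub, sub_mul, hp]
    have q' : star (1 - p) = 1 - p := by simp [hs]
    rw [star_mul, q'] at b2
    have e : (1 - p) * ((1 - p) * v * (star v * (1 - p))) * (1 - p) = (1 - p) * v * star v * (1 - p) := by
      calc _ = ((1 - p) * (1 - p)) * v * star v * ((1 - p) * (1 - p)) := by noncomm_ring
        _ = _ := by rw [q]
    rw [e] at b2
    simpa [q] using b2
  have hq : v * star v * (v * star v) = v * star v := by
    calc _ = v * (star v * v) * star v := by noncomm_ring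
      _ = _ := by rw [hv', hv]
  have tot : star (v * star v - p) * (v * star v - p) ≤ c • (1 : A) := by
    have := add_le_add k1 hy
    rw [← smul_add] at this
    convert this using 1
    · simp only [star_sub, star_mul, star_star, hs]
      have : (v * star v - p) * (v * star v - p) = v * star v * (v * star v) - v * star v * p - p * v * star v + p * p := by noncomm_ring
      rw [this, hq, hp]
      noncomm_ring
    · simp
  rw [← Algebra.algebraMap_eq_smul_one, ← CStarAlgebra.norm_le_iff_le_algebraMap _ hc0 (star_mul_self_nonneg _),
    CStarRing.norm_star_mul_self] at tot
  nlinarith [norm_nonneg (v * star v - p)]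

/-- For `v ∈ K_p`, the element `pvp` is invertible in the corner algebra `pAp`
if and only if `‖vv* − p‖ < 1`. -/
theorem stmt_8 {A : Type*} [CStarAlgebra A]
    (p : A) (hp_star : p = star p) (hp_idem : p * p = p)
    (v : A) (hv : v = v * p) (hv' : star v * v = p) :
    (∃ k : A, k = p * k * p ∧ (p * v * p) * k = p ∧ k * (p * v * p) = p) ↔
      ‖v * star v - p‖ < 1 := by
  have hs := hp_star.symm
  have hvp := hv.symm
  have e : p * v * p = p * v := by rw [mul_assoc, hvp]
  rw [e]
  constructor
  · rintro ⟨k, -, h1, h2⟩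
    letI := CStarAlgebra.spectralOrder A
    haveI := CStarAlgebra.spectralOrderedRing A
    exact aux_fwd p hs hp_idem v hvp hv' k h1 h2
  · intro hn
    have hpn : ‖p‖ ≤ 1 := by
      have : ‖p‖ = ‖p‖ * ‖p‖ := by
        conv_lhs => rw [← hp_idem]
        nth_rw 1 [← hs]
        exact CStarRing.norm_star_mul_self
      nlinarith [norm_nonneg p]
    have hvn : ‖v‖ ≤ 1 := by
      have : ‖p‖ = ‖v‖ * ‖v‖ := by
        rw [← hv']
        exact CStarRing.norm_star_mul_self
      nlinarith [norm_nonneg v]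
    have hsv : p * star v = star v := by
      have := congrArg star hvp
      rwa [star_mul, hs] at this
    have bd : ∀ a b x : A, ‖a‖ ≤ 1 → ‖b‖ ≤ 1 → ‖x‖ < 1 → ‖a * x * b‖ < 1 := by
      intro a b x ha hb hx
      refine lt_of_le_of_lt ((norm_mul_le _ _).trans (mul_le_of_le_one_right (norm_nonneg _) hb)) ?_
      exact lt_of_le_of_lt ((norm_mul_le _ _).trans (mul_le_of_le_one_left (norm_nonneg _) ha)) hx
    obtain ⟨r, hr, -, -, hrp⟩ := aux_inv p (p * v * star v * p) hp_idem
      (by simp only [← mul_assoc, hp_idem]) (by simp only [mul_assoc, hp_idem]) (by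
        have := bd p p _ hpn hpn hn
        rw [← norm_neg] at this
        have e3 : -(p * (v * star v - p) * p) = p * p * p - p * v * star v * p := by noncomm_ring
        rw [e3, hp_idem, hp_idem] at this
        exact this)
    obtain ⟨l, -, hl, hpl, -⟩ := aux_inv p (star v * p * v) hp_idem
      (by simp only [← mul_assoc, hsv]) (by simp only [mul_assoc, hvp]) (by
        have := bd (star v) v _ (by rwa [norm_star]) hvn hn
        convert this using 2
        have : star v * (v * star v - p) * v = (star v * v) * (star v * v) - star v * p * v := by noncomm_ring
        rw [this, hv', hp_idem])
    have R : p * v * (star v * p * r) = p := by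
      have e4 : p * v * (star v * p * r) = p * v * star v * p * r := by simp only [mul_assoc]
      rw [e4, hr]
    have L : l * star v * p * (p * v) = p := by
      calc _ = l * (star v * (p * p) * v) := by noncomm_ring
        _ = p := by rw [hp_idem, hl]
    have eq : star v * p * r = l * star v * p := by
      calc star v * p * r = p * (star v * p * r) := by simp only [← mul_assoc, hsv]
        _ = l * star v * p * (p * v) * (star v * p * r) := by rw [L]
        _ = l * star v * p * (p * v * (star v * p * r)) := by noncomm_ring
        _ = l * star v * p := by rw [R, mul_assoc, hp_idem]
    refine ⟨star v * p * r, ?_, R, by rw [eq, L]⟩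
    simp only [← mul_assoc, hsv]
    rw [mul_assoc (star v * p), hrp]
end

section
/- Let H be an infinite-dimensional separable complex Hilbert space, p ∈ B(H) a nonzero orthogonal projection, and g ∈ B(H) invertible. Suppose that for every orthogonal projection q ∈ B(H) that is Murray–von Neumann equivalent to p (i.e. q = vv* and v*v = p for some v ∈ B(H)), g maps the range of q onto the range of q. Then g is a scalar multiple of the identity: g = c·I for some c ∈ ℂ. -/
theorem aux_countable {H : Type*} [NormedAddCommGroup H] [InnerProductSpace ℂ H]
    [TopologicalSpace.SeparableSpace H] {ι : Type*} {v : ι → H} (hv : Orthonormal ℂ v) :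
    Countable ι := by
  refine Pairwise.countable_of_isOpen_disjoint (s := fun i => Metric.ball (v i) (1 / 2)) ?_
    (fun i => Metric.isOpen_ball) (fun i => ⟨v i, Metric.mem_ball_self (by norm_num)⟩)
  intro i j hij
  refine Metric.ball_disjoint_ball ?_
  have h := norm_sub_sq (𝕜 := ℂ) (v i) (v j)
  rw [hv.1 i, hv.1 j, hv.2 hij, map_zero] at h
  rw [dist_eq_norm]
  nlinarith [norm_nonneg (v i - v j)]

theorem aux_isometry {H : Type*} [NormedAddCommGroup H] [InnerProductSpace ℂ H] [CompleteSpace H]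
    [TopologicalSpace.SeparableSpace H] (hinf : ¬ FiniteDimensional ℂ H)
    (e x w : H) (he : ‖e‖ = 1) (hx : ‖x‖ = 1) (hw : ‖w‖ = 1) (hxw : inner ℂ x w = 0) :
    ∃ U : H →ₗᵢ[ℂ] H, U e = x ∧ ∀ z, inner ℂ w (U z) = 0 := by
  classical
  have hwx : inner ℂ w x = 0 := inner_eq_zero_symm.1 hxw
  have hne : x ≠ w := by
    rintro rfl
    rw [inner_self_eq_zero] at hxw
    simp [hxw] at hx
  have h1 : Orthonormal ℂ ((↑) : ({e} : Set H) → H) := by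
    refine ⟨?_, ?_⟩
    · rintro ⟨a, rfl⟩; exact he
    · rintro ⟨a, rfl⟩ ⟨b, rfl⟩ h; exact absurd rfl h
  have h2 : Orthonormal ℂ ((↑) : ({x, w} : Set H) → H) := by
    refine ⟨?_, ?_⟩
    · rintro ⟨a, rfl | rfl⟩
      · exact hx
      · exact hw
    · rintro ⟨a, rfl | rfl⟩ ⟨b, rfl | rfl⟩ h
      · exact absurd rfl h
      · exact hxw
      · exact hwx
      · exact absurd rfl h
  obtain ⟨I, b, heI, hb⟩ := h1.exists_hilbertBasis_extension
  obtain ⟨J, c, hJ, hc⟩ := h2.exists_hilbertBasis_extension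
  have hI : Countable I := aux_countable b.orthonormal
  have hJinf : J.Infinite := by
    intro hfin
    have : Fintype J := hfin.fintype
    exact hinf (c.toOrthonormalBasis.toBasis.finiteDimensional_of_finite)
  have hinf2 : (J \ {x, w}).Infinite := hJinf.sdiff (Set.toFinite _)
  have : Infinite ↥(J \ {x, w}) := hinf2.to_subtype
  obtain ⟨n, hn⟩ := exists_injective_nat I
  let h : I → ↥(J \ {x, w}) := fun i => Infinite.natEmbedding _ (n i)
  have hh : Function.Injective h := (Infinite.natEmbedding _).injective.comp hn
  have heI' : e ∈ I := heI rfl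
  have hxJ : x ∈ J := hJ (by simp)
  have hwJ : w ∈ J := hJ (by simp)
  let f : I → J := fun i => if (i : H) = e then ⟨x, hxJ⟩ else ⟨h i, (h i).2.1⟩
  have hf : Function.Injective f := by
    intro i j hij
    by_cases hi : (i : H) = e <;> by_cases hj : (j : H) = e
    · exact Subtype.ext (hi.trans hj.symm)
    · simp only [f, hi, hj, if_true, if_false, Subtype.mk.injEq] at hij
      exact absurd (by simp [← hij]) (h j).2.2
    · simp only [f, hi, hj, if_true, if_false, Subtype.mk.injEq] at hij
      exact absurd (by simp [hij]) (h i).2.2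
    · simp only [f, hi, hj, if_false, Subtype.mk.injEq] at hij
      exact hh (Subtype.ext hij)
  have hfw : ∀ i, f i ≠ ⟨w, hwJ⟩ := by
    intro i hi
    by_cases hie : (i : H) = e
    · simp only [f, hie, if_true, Subtype.mk.injEq] at hi
      exact hne hi
    · simp only [f, hie, if_false, Subtype.mk.injEq] at hi
      exact absurd (by simp [hi]) (h i).2.2
  have hco := c.orthonormal
  have hu : Orthonormal ℂ (fun i => c (f i)) := hco.comp f hf
  have hV := hu.orthogonalFamily
  refine ⟨hV.linearIsometry.comp b.repr.toLinearIsometry, ?_, ?_⟩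
  · have hbe : b ⟨e, heI'⟩ = e := by rw [hb]
    have : b.repr e = lp.single 2 ⟨e, heI'⟩ (1 : ℂ) := by
      conv_lhs => rw [← hbe]
      exact b.repr_self _
    change hV.linearIsometry (b.repr e) = x
    rw [this, hV.linearIsometry_apply_single]
    simp [f, hc]
  · intro z
    have hs := hV.hasSum_linearIsometry (b.repr z)
    have hs2 := hs.mapL (innerSL ℂ w)
    refine hs2.unique ?_
    convert hasSum_zero using 2 with i
    have : inner ℂ w (c (f i)) = 0 := by
      have := hco.2 (hfw i).symm
      simpa [hc] using this
    simp [inner_smul_right, this]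

/-- If `H` is an infinite-dimensional separable complex Hilbert space, `p` a nonzero
orthogonal projection, `g` invertible, and `g` maps the range of every projection equivalent to
`p` onto itself, then `g` is a scalar multiple of the identity. -/
theorem stmt_9 {H : Type*} [NormedAddCommGroup H] [InnerProductSpace ℂ H] [CompleteSpace H]
    [TopologicalSpace.SeparableSpace H] (hinf : ¬ FiniteDimensional ℂ H)
    (p : H →L[ℂ] H) (hp_star : star p = p) (hp_idem : p * p = p) (hp0 : p ≠ 0)
    (g : H →L[ℂ] H) (hg : IsUnit g)
    (hmaps : ∀ q : H →L[ℂ] H, star q = q → q * q = q →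
      (∃ v : H →L[ℂ] H, star v * v = p ∧ v * star v = q) →
      (g : H → H) '' Set.range (q : H → H) = Set.range (q : H → H)) :
    ∃ c : ℂ, g = c • (1 : H →L[ℂ] H) := by
  -- a unit vector in the range of `p`
  obtain ⟨e, he, hpe⟩ : ∃ e : H, ‖e‖ = 1 ∧ p e = e := by
    obtain ⟨y, hy⟩ : ∃ y, p y ≠ 0 := by
      by_contra! h
      exact hp0 (ContinuousLinearMap.ext h)
    refine ⟨((‖p y‖⁻¹ : ℝ) : ℂ) • p y, ?_, ?_⟩
    · rw [norm_smul]
      simp [hy]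
    · rw [map_smul, ← mul_apply_eq_comp, hp_idem]
  have key : ∀ x : H, ‖x‖ = 1 → g x = inner ℂ x (g x) • x := by
    intro x hx
    by_contra hne
    set w0 := g x - inner ℂ x (g x) • x with hw0
    have hw0ne : w0 ≠ 0 := sub_ne_zero.2 hne
    have hxw0 : inner ℂ x w0 = 0 := by
      rw [hw0, inner_sub_right, inner_smul_right, inner_self_eq_norm_sq_to_K, hx]
      simp
    obtain ⟨U, hUe, hU⟩ := aux_isometry hinf e x (((‖w0‖⁻¹ : ℝ) : ℂ) • w0) he hx
      (by rw [norm_smul]; simp [hw0ne]) (by rw [inner_smul_right, hxw0, mul_zero])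
    have hU' : ∀ z, inner ℂ w0 (U z) = 0 := by
      intro z
      have := hU z
      rw [inner_smul_left] at this
      simpa [hw0ne] using this
    let T : H →L[ℂ] H := U.toContinuousLinearMap
    have hT : star T * T = 1 := by
      rw [ContinuousLinearMap.star_eq_adjoint]
      exact (ContinuousLinearMap.norm_map_iff_adjoint_comp_self T).1 U.norm_map
    have hs : star (T * p) * (T * p) = p := by
      rw [star_mul, hp_star, mul_assoc, ← mul_assoc (star T), hT, one_mul, hp_idem]
    have hq : (T * p) * star (T * p) = T * (p * star T) := by
      rw [star_mul, hp_star, mul_assoc, ← mul_assoc p, hp_idem]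
    have hm := hmaps ((T * p) * star (T * p)) (by rw [star_mul, star_star])
      (by rw [mul_assoc, ← mul_assoc (star (T * p)), hs, ← mul_assoc, mul_assoc T, hp_idem])
      ⟨_, hs, rfl⟩
    have hTe : T e = x := hUe
    have hxmem : x ∈ Set.range ((T * p) * star (T * p)) := by
      refine ⟨x, ?_⟩
      have : (star T) x = e := by
        rw [← hTe, ← mul_apply_eq_comp, hT]; rfl
      rw [hq]
      simp only [mul_apply_eq_comp, this, hpe, hTe]
    have hgx : g x ∈ Set.range ((T * p) * star (T * p)) := by
      rw [← hm]; exact ⟨x, hxmem, rfl⟩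
    obtain ⟨z, hz⟩ := hgx
    have h0 : inner ℂ w0 (g x) = 0 := by
      rw [← hz, hq]; exact hU' _
    have : inner ℂ w0 w0 = 0 := by
      conv_lhs => rw [hw0]
      rw [← hw0, inner_sub_right, h0, inner_smul_right, inner_eq_zero_symm.1 hxw0]
      simp
    exact hw0ne (inner_self_eq_zero.1 this)
  obtain ⟨c, hc⟩ := LinearMap.exists_eq_smul_id_of_forall_notLinearIndependent
    (f := (g : H →ₗ[ℂ] H)) (by
      intro v hli
      have hv : v ≠ 0 := hli.ne_zero 0
      rw [LinearIndependent.pair_iff' hv] at hli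
      have hk := key (((‖v‖⁻¹ : ℝ) : ℂ) • v) (by rw [norm_smul]; simp [hv])
      rw [map_smul, smul_comm] at hk
      have hr : ((‖v‖⁻¹ : ℝ) : ℂ) ≠ 0 := by simp [hv]
      exact hli _ (smul_right_injective H hr hk).symm)
  refine ⟨c, ?_⟩
  ext y
  exact LinearMap.congr_fun hc y
end

section
/- Let λ, μ ∈ A be positive invertible elements satisfying ελε = λ^{-1} and εμε = μ^{-1}, where ε = 2p − 1. Then for every t ∈ ℝ, the element γ(t) = μ^{1/2} (μ^{-1/2} λ μ^{-1/2})^t μ^{1/2} (real powers taken by continuous functional calculus on positive invertible elements) is positive invertible and satisfies ε γ(t) ε = γ(t)^{-1}. (The geodesics of the positive cone A⁺ joining two positive ε-unitaries remain in the set of positive ε-unitaries.) -/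
lemma aux_eps_rpow {A : Type*} [CStarAlgebra A] [PartialOrder A] [StarOrderedRing A]
    (e : A) (he_star : star e = e) (he : e * e = 1) (a : A) (ha : IsStrictlyPositive a)
    (h : e * a * e = Ring.inverse a) (s : ℝ) : e * a ^ s * e = a ^ (-s) := by
  have hu : e ∈ unitary A := by
    rw [Unitary.mem_iff, he_star]; exact ⟨he, he⟩
  have hphi : ∀ x, Unitary.conjStarAlgAut ℂ A ⟨e, hu⟩ x = e * x * e := by
    intro x
    simp [Unitary.conjStarAlgAut_apply, he_star]
  have ha0 : 0 ≤ a := ha.nonneg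
  have hau : IsUnit a := ha.isUnit
  have h1 : Unitary.conjStarAlgAut ℂ A ⟨e, hu⟩ a = a ^ (-1 : ℝ) := by
    rw [hphi, h, CFC.inverse_eq_rpow_neg_one]
  have hcont : Continuous (Unitary.conjStarAlgAut ℂ A ⟨e, hu⟩) := by
    have : (Unitary.conjStarAlgAut ℂ A ⟨e, hu⟩ : A → A) = fun x => e * x * e := funext hphi
    rw [this]; fun_prop
  have key : Unitary.conjStarAlgAut ℂ A ⟨e, hu⟩ (a ^ s)
      = (Unitary.conjStarAlgAut ℂ A ⟨e, hu⟩ a) ^ s := by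
    rw [CFC.rpow_eq_cfc_real (a := a) ha0, CFC.rpow_eq_cfc_real (by rw [h1]; exact CFC.rpow_nonneg)]
    refine StarAlgHomClass.map_cfc (S := ℂ) _ (fun x : ℝ => x ^ s) a ?_ hcont ?_ ?_
    · intro x hx
      refine (Real.continuousAt_rpow_const _ _ (Or.inl ?_)).continuousWithinAt
      rintro rfl
      exact spectrum.zero_notMem ℝ hau hx
    · exact ha0.isSelfAdjoint
    · rw [h1]; exact CFC.rpow_nonneg.isSelfAdjoint
  rw [← hphi, key, h1, CFC.rpow_rpow a (-1) s (by norm_num) ha, neg_one_mul]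

/-- geodesics of the positive cone joining two positive `ε`-unitaries remain in
the set of positive `ε`-unitaries. -/
theorem stmt_11 {A : Type*} [CStarAlgebra A] [PartialOrder A] [StarOrderedRing A]
    (p : A) (hp_star : p = star p) (hp_idem : p * p = p)
    (lam mu : A) (hl_pos : 0 ≤ lam) (hl_u : IsUnit lam)
    (hm_pos : 0 ≤ mu) (hm_u : IsUnit mu)
    (hl_eps : (2 * p - 1) * lam * (2 * p - 1) = Ring.inverse lam)
    (hm_eps : (2 * p - 1) * mu * (2 * p - 1) = Ring.inverse mu)
    (t : ℝ) :
    ∀ g : A, g = mu ^ ((1 : ℝ) / 2) *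
        ((mu ^ (-(1 : ℝ) / 2) * lam * mu ^ (-(1 : ℝ) / 2)) ^ t) * mu ^ ((1 : ℝ) / 2) →
      0 ≤ g ∧ IsUnit g ∧ (2 * p - 1) * g * (2 * p - 1) = Ring.inverse g := by
  have hinv : ∀ x y : A, x * y = 1 → y * x = 1 → Ring.inverse x = y := fun x y hxy hyx =>
    Ring.inverse_unit (⟨x, y, hxy, hyx⟩ : Aˣ)
  have he_star : star (2 * p - 1) = 2 * p - 1 := by
    rw [two_mul, star_sub, star_add, star_one, ← hp_star]
  have he : (2 * p - 1) * (2 * p - 1) = 1 := by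
    have : (2 * p - 1) * (2 * p - 1) = 4 * (p * p) - 4 * p + 1 := by noncomm_ring
    rw [this, hp_idem]; simp
  generalize 2 * p - 1 = e at *
  have hm : IsStrictlyPositive mu := hm_u.isStrictlyPositive hm_pos
  have hx := aux_eps_rpow e he_star he mu hm hm_eps (1 / 2)
  have hy := aux_eps_rpow e he_star he mu hm hm_eps (-(1 / 2))
  have hxy := CFC.rpow_mul_rpow_neg (a := mu) (1 / 2) hm
  have hyx := CFC.rpow_neg_mul_rpow (a := mu) (1 / 2) hm
  have hx0 : 0 ≤ mu ^ (1 / 2 : ℝ) := CFC.rpow_nonneg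
  have hy0 : 0 ≤ mu ^ (-(1 / 2) : ℝ) := CFC.rpow_nonneg
  rw [neg_neg] at hy
  rw [neg_div]
  generalize mu ^ (1 / 2 : ℝ) = x at *
  generalize mu ^ (-(1 / 2) : ℝ) = y at *
  have hxu : IsUnit x := ⟨⟨x, y, hxy, hyx⟩, rfl⟩
  have hyu : IsUnit y := ⟨⟨y, x, hyx, hxy⟩, rfl⟩
  have conj_mul : ∀ a b : A, e * (a * b) * e = (e * a * e) * (e * b * e) := by
    intro a b
    calc e * (a * b) * e = e * a * 1 * b * e := by simp [mul_assoc]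
      _ = _ := by rw [← he]; simp only [mul_assoc]
  have cancel : ∀ a b c d f k : A, c * d = 1 → b * f = 1 → a * k = 1 →
      (a * b * c) * (d * f * k) = 1 := by
    intro a b c d f k h1 h2 h3
    calc (a * b * c) * (d * f * k) = a * (b * (c * d) * f) * k := by simp only [mul_assoc]
      _ = 1 := by rw [h1, mul_one, h2, mul_one, h3]
  have hh0 : 0 ≤ y * lam * y := by
    have := star_left_conjugate_nonneg hl_pos y
    rwa [hy0.isSelfAdjoint.star_eq] at this
  have hh : IsStrictlyPositive (y * lam * y) := ((hyu.mul hl_u).mul hyu).isStrictlyPositive hh0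
  have hheps : e * (y * lam * y) * e = Ring.inverse (y * lam * y) := by
    rw [conj_mul, conj_mul, hy, hl_eps]
    symm
    apply hinv
    · exact cancel _ _ _ _ _ _ hyx (Ring.mul_inverse_cancel _ hl_u) hyx
    · exact cancel _ _ _ _ _ _ hxy (Ring.inverse_mul_cancel _ hl_u) hxy
  have hk := aux_eps_rpow e he_star he _ hh hheps t
  have hk1 := CFC.rpow_mul_rpow_neg t hh
  have hk2 := CFC.rpow_neg_mul_rpow t hh
  have hk0 : 0 ≤ (y * lam * y) ^ t := CFC.rpow_nonneg
  generalize (y * lam * y) ^ t = k at *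
  generalize (y * lam * y) ^ (-t) = l at *
  rintro g rfl
  have g1 : (x * k * x) * (y * l * y) = 1 := cancel _ _ _ _ _ _ hxy hk1 hxy
  have g2 : (y * l * y) * (x * k * x) = 1 := cancel _ _ _ _ _ _ hyx hk2 hyx
  refine ⟨?_, ⟨⟨_, _, g1, g2⟩, rfl⟩, ?_⟩
  · have := star_left_conjugate_nonneg hk0 x
    rwa [hx0.isSelfAdjoint.star_eq] at this
  · rw [conj_mul, conj_mul, hx, hk, hinv _ _ g1 g2]
end

section
/- Let u ∈ A be ε-unitary, i.e. u is invertible and u*εu = ε, where ε = 2p − 1. Then ‖(1−p)up‖ = ‖(1−p)u^{-1}p‖ = ‖(1−p)u*p‖. -/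
theorem norm_one_add_aux {A : Type*} [CStarAlgebra A] [Nontrivial A] (x : A) :
    ‖1 + star x * x‖ = 1 + ‖star x * x‖ := by
  let _ := CStarAlgebra.spectralOrder A
  let _ := CStarAlgebra.spectralOrderedRing A
  have h0 : 0 ≤ star x * x := star_mul_self_nonneg x
  have h1 : (0 : A) ≤ 1 + star x * x := add_nonneg zero_le_one h0
  apply le_antisymm
  · simpa using norm_add_le (1 : A) (star x * x)
  · have h2 : (1 : ℝ) ≤ ‖1 + star x * x‖ := by
      have := CStarAlgebra.norm_le_norm_of_nonneg_of_le (a := (1 : A)) (b := 1 + star x * x)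
        (hab := le_add_of_nonneg_right h0)
      simpa using this
    have h3 : 1 + star x * x ≤ algebraMap ℝ A ‖1 + star x * x‖ :=
      (CStarAlgebra.norm_le_iff_le_algebraMap _ (norm_nonneg _) h1).1 le_rfl
    have h4 : ‖star x * x‖ ≤ ‖1 + star x * x‖ - 1 := by
      rw [CStarAlgebra.norm_le_iff_le_algebraMap _ (by linarith) h0, map_sub, map_one]
      exact le_sub_iff_add_le'.2 h3
    linarith

theorem alg_aux {A : Type*} [CStarAlgebra A] (p : A) (hs : star p = p) (hp : p * p = p)
    (u : A) (h : star u * (2 * p - 1) * u = 2 * p - 1) :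
    star (p * u * p + (1 - p)) * (p * u * p + (1 - p)) =
      1 + star ((1 - p) * u * p) * ((1 - p) * u * p) := by
  have hp' : ∀ x, p * (p * x) = p * x := fun x => by rw [← mul_assoc, hp]
  have h2 : p * (star u * (2 * p - 1) * u) * p = p := by
    rw [h]; simp only [two_mul, mul_add, add_mul, mul_sub, sub_mul, mul_one, hp]; abel
  have h3 : p * (star u * (p * (u * p))) + p * (star u * (p * (u * p)))
      - p * (star u * (u * p)) = p := by
    refine Eq.trans ?_ h2
    simp only [two_mul, mul_add, add_mul, mul_sub, sub_mul, mul_one, mul_assoc, one_mul]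
  simp only [star_add, star_mul, star_sub, star_one, hs, mul_add, add_mul, mul_sub, sub_mul,
    mul_one, one_mul, mul_assoc, hp, hp']
  rw [← sub_eq_zero]
  rw [← sub_eq_zero] at h3
  rw [← h3]
  abel

/-- if `u` is `ε`-unitary then `‖(1−p)up‖ = ‖(1−p)u⁻¹p‖ = ‖(1−p)u*p‖`. -/
theorem stmt_13 {A : Type*} [CStarAlgebra A]
    (p : A) (hp_star : p = star p) (hp_idem : p * p = p)
    (u : A) (hu : IsUnit u) (hue : star u * (2 * p - 1) * u = 2 * p - 1) :
    ‖(1 - p) * u * p‖ = ‖(1 - p) * Ring.inverse u * p‖ ∧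
    ‖(1 - p) * u * p‖ = ‖(1 - p) * star u * p‖ := by
  rcases subsingleton_or_nontrivial A with hA | hA
  · exact ⟨congrArg _ (Subsingleton.elim _ _), congrArg _ (Subsingleton.elim _ _)⟩
  have hs := hp_star.symm
  have hee : (2 * p - 1) * (2 * p - 1) = 1 := by
    simp only [two_mul, mul_add, add_mul, mul_sub, sub_mul, mul_one, one_mul, hp_idem]; abel
  have hinv : Ring.inverse u = (2 * p - 1) * star u * (2 * p - 1) := by
    have h1 : ((2 * p - 1) * star u * (2 * p - 1)) * u = 1 := by
      
      rw [mul_assoc, mul_assoc, ← mul_assoc (star u), hue, hee]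
    calc Ring.inverse u = (((2 * p - 1) * star u * (2 * p - 1)) * u) * Ring.inverse u := by
          rw [h1, one_mul]
      _ = _ := by rw [mul_assoc, Ring.mul_inverse_cancel u hu, mul_one]
  have hue' : u * (2 * p - 1) * star u = 2 * p - 1 := by
    have h1 := Ring.mul_inverse_cancel u hu
    rw [hinv] at h1
    calc u * (2 * p - 1) * star u
        = u * (2 * p - 1) * star u * ((2 * p - 1) * (2 * p - 1)) := by rw [hee, mul_one]
      _ = (u * ((2 * p - 1) * star u * (2 * p - 1))) * (2 * p - 1) := by simp only [mul_assoc]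
      _ = _ := by rw [h1, one_mul]
  have e1 : (1 - p) * Ring.inverse u * p = -((1 - p) * star u * p) := by
    have l : (1 - p) * (2 * p - 1) = -(1 - p) := by
      simp only [two_mul, mul_add, mul_sub, sub_mul, mul_one, one_mul, hp_idem]; abel
    have r : (2 * p - 1) * p = p := by
      simp only [two_mul, add_mul, sub_mul, one_mul, hp_idem]; abel
    calc _ = ((1 - p) * (2 * p - 1)) * star u * ((2 * p - 1) * p) := by
          rw [hinv]; simp only [mul_assoc]
      _ = _ := by rw [l, r]; simp only [neg_mul]
  have key : ‖(1 - p) * u * p‖ = ‖(1 - p) * star u * p‖ := by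
    have k1 := congrArg norm (alg_aux p hs hp_idem u hue)
    have k2 := congrArg norm (alg_aux p hs hp_idem (star u) (by rwa [star_star]))
    have k3 : p * star u * p + (1 - p) = star (p * u * p + (1 - p)) := by
      simp only [star_add, star_mul, star_sub, star_one, hs, mul_assoc]
    rw [norm_one_add_aux, CStarRing.norm_star_mul_self, CStarRing.norm_star_mul_self] at k1 k2
    rw [k3, norm_star] at k2
    exact (mul_self_inj (norm_nonneg _) (norm_nonneg _)).1 (by linarith)
  exact ⟨by rw [e1, norm_neg, key], key⟩
end

section
/- Let u ∈ A be ε-unitary, i.e. u is invertible and u*εu = ε, where ε = 2p − 1. Then (uu*)^{1/2} is a positive ε-unitary, and there exists a unitary w of the corner algebra pAp (w ∈ pAp with w*w = ww* = p) such that u p w = (uu*)^{1/2} p. (Hence [up] = [(uu*)^{1/2} p] in the projective space, i.e. every point of the disc D⁺ has a positive ε-unitary representative.) -/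
/-- if `u` is `ε`-unitary then `(uu*)^{1/2}` is a positive `ε`-unitary and there
is a unitary `w` of `pAp` with `u p w = (uu*)^{1/2} p`. -/
theorem stmt_14 {A : Type*} [CStarAlgebra A] [PartialOrder A] [StarOrderedRing A]
    (p : A) (hp_star : p = star p) (hp_idem : p * p = p)
    (u : A) (hu : IsUnit u) (hue : star u * (2 * p - 1) * u = 2 * p - 1) :
    (0 ≤ CFC.sqrt (u * star u) ∧ IsUnit (CFC.sqrt (u * star u)) ∧
      (2 * p - 1) * CFC.sqrt (u * star u) * (2 * p - 1) = Ring.inverse (CFC.sqrt (u * star u))) ∧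
    ∃ w : A, w = p * w * p ∧ star w * w = p ∧ w * star w = p ∧
      u * p * w = CFC.sqrt (u * star u) * p := by
  have ha : 0 ≤ u * star u := mul_star_self_nonneg u
  have hs0 : 0 ≤ CFC.sqrt (u * star u) := CFC.sqrt_nonneg _
  have hss : CFC.sqrt (u * star u) * CFC.sqrt (u * star u) = u * star u :=
    CFC.sqrt_mul_sqrt_self _ ha
  have hau : IsUnit (u * star u) := hu.mul hu.star
  have hsu : IsUnit (CFC.sqrt (u * star u)) := (CFC.isUnit_sqrt_iff _ ha).2 hau
  have hinv : CFC.sqrt (Ring.inverse (u * star u)) = Ring.inverse (CFC.sqrt (u * star u)) :=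
    CFC.sqrt_ringInverse
  obtain ⟨e, he⟩ : ∃ e, e = 2 * p - 1 := ⟨_, rfl⟩
  have hee : e * e = 1 := by
    have : e * e = 4 * (p * p) - 4 * p + 1 := by rw [he]; noncomm_ring
    rw [this, hp_idem]; noncomm_ring
  have hes : star e = e := by
    rw [he, star_sub, star_mul, ← hp_star, star_one, star_ofNat]; noncomm_ring
  rw [← he] at hue ⊢
  have h1 : u * (e * star u * e) = 1 := by
    have h2 : (e * star u * e) * u = 1 := by
      rw [mul_assoc, mul_assoc, ← mul_assoc (star u), hue, hee]
    obtain ⟨v, hv⟩ := hu.exists_right_inv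
    rw [left_inv_eq_right_inv h2 hv, hv]
  generalize hS : CFC.sqrt (u * star u) = s at *
  have hsstar : star s = s := (IsSelfAdjoint.of_nonneg hs0).star_eq
  have hese : 0 ≤ e * s * e := by
    have := star_left_conjugate_nonneg hs0 e
    rwa [hes] at this
  have hainv : Ring.inverse (u * star u) = e * (u * star u) * e := by
    obtain ⟨a, haa⟩ := hau
    rw [← haa, Ring.inverse_unit]
    refine (Units.inv_eq_of_mul_eq_one_right ?_)
    rw [haa]
    calc u * star u * (e * (u * star u) * e) = u * (star u * e * u) * star u * e := by noncomm_ring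
      _ = 1 := by rw [hue, ← h1]; noncomm_ring
  have ht : e * s * e = Ring.inverse s := by
    rw [← hinv]
    symm
    apply CFC.sqrt_unique _ hese
    rw [hainv, ← hss]
    calc e * s * e * (e * s * e) = e * s * (e * e) * s * e := by noncomm_ring
      _ = _ := by rw [hee]; noncomm_ring
  refine ⟨⟨hs0, hsu, ht⟩, ?_⟩
  have hst : s * (e * s * e) = 1 := by rw [ht]; exact Ring.mul_inverse_cancel _ hsu
  have hts : (e * s * e) * s = 1 := by rw [ht]; exact Ring.inverse_mul_cancel _ hsu
  have htstar : star (e * s * e) = e * s * e := by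
    simp only [star_mul, hes, hsstar, mul_assoc]
  have hete : e * (e * s * e) * e = s := by
    calc e * (e * s * e) * e = (e * e) * s * (e * e) := by noncomm_ring
      _ = s := by rw [hee]; simp
  generalize e * s * e = t at *
  obtain ⟨w, hw⟩ : ∃ w, w = star u * t := ⟨_, rfl⟩
  have huw : u * w = s := by rw [hw, ← mul_assoc, ← hss, mul_assoc, hst, mul_one]
  have hwstar : star w = t * u := by rw [hw, star_mul, star_star, htstar]
  have hw1 : star w * w = 1 := by rw [hwstar, mul_assoc, huw, hts]
  have hw2 : w * star w = 1 := by
    apply hu.mul_left_cancel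
    rw [← mul_assoc, huw, hwstar, ← mul_assoc, hst, one_mul, mul_one]
  have hew : e * w * e = w := by
    apply hu.mul_left_cancel
    rw [huw, hw]
    calc u * (e * (star u * t) * e) = u * (e * star u * 1) * t * e := by noncomm_ring
      _ = u * (e * star u * e) * (e * t * e) := by rw [← hee]; noncomm_ring
      _ = s := by rw [h1, hete, one_mul]
  have hcomm : e * w = w * e := by
    calc e * w = e * w * (e * e) := by rw [hee, mul_one]
      _ = e * w * e * e := by noncomm_ring
      _ = w * e := by rw [hew]
  have hpw : p * w = w * p := by
    have h2 : (2:ℂ) • (p * w) = (2:ℂ) • (w * p) := by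
      rw [two_smul, two_smul]
      rw [he] at hcomm
      calc p * w + p * w = (2 * p - 1) * w + w := by noncomm_ring
        _ = w * (2 * p - 1) + w := by rw [hcomm]
        _ = _ := by noncomm_ring
    exact smul_right_injective A (two_ne_zero : (2:ℂ) ≠ 0) h2
  have hpws : p * star w = star w * p := by
    have := congrArg star hpw
    rw [star_mul, star_mul, ← hp_star] at this
    exact this.symm
  refine ⟨w * p, ?_, ?_, ?_, ?_⟩
  · rw [← mul_assoc, hpw, mul_assoc, mul_assoc, hp_idem, hp_idem]
  · rw [star_mul, ← hp_star, mul_assoc, ← mul_assoc (star w), hw1, one_mul, hp_idem]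
  · rw [star_mul, ← hp_star, mul_assoc, ← mul_assoc p, hp_idem, hpws, ← mul_assoc, hw2, one_mul]
  · rw [mul_assoc, ← mul_assoc p, hpw, mul_assoc, hp_idem, ← mul_assoc, huw]
end

section
/- Let λ, μ ∈ A be positive invertible elements with ελε = λ^{-1} and εμε = μ^{-1}, where ε = 2p − 1. If there exists h ∈ pAp invertible in the corner algebra pAp such that (λp)h = μp, then λ = μ. (The map λ ↦ [λp] from the positive ε-unitaries to the projective space is injective.) -/
/-- Basic facts on the idempotent `E = l p l⁻¹`. -/
theorem aux_15 {A : Type*} [CStarAlgebra A] [PartialOrder A] [StarOrderedRing A]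
    (p : A) (hp_star : p = star p) (hp_idem : p * p = p)
    (l : A) (hl_pos : 0 ≤ l) (hl_u : IsUnit l)
    (hl : (2 * p - 1) * l * (2 * p - 1) = Ring.inverse l) :
    ∃ m : A, l * m = 1 ∧ m * l = 1 ∧
      (2 * p - 1) * star (l * p * m) * (2 * p - 1) = l * p * m ∧
      (2 * (l * p * m) - 1) * (2 * p - 1) = l * l := by
  have h1 : l * Ring.inverse l = 1 := Ring.mul_inverse_cancel _ hl_u
  have h2 : Ring.inverse l * l = 1 := Ring.inverse_mul_cancel _ hl_u
  have hls : star l = l := (IsSelfAdjoint.of_nonneg hl_pos).star_eq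
  have hee : (2 * p - 1) * (2 * p - 1) = 1 := by
    have : (2 * p - 1) * (2 * p - 1) = 4 * (p * p) - 4 * p + 1 := by noncomm_ring
    rw [this, hp_idem]; simp
  have hes : star (2 * p - 1) = 2 * p - 1 := by
    have : (2 * p - 1) = p + p - 1 := by noncomm_ring
    rw [this]; simp [← hp_star]
  have hepe : (2 * p - 1) * p * (2 * p - 1) = p := by
    have : (2 * p - 1) * p * (2 * p - 1) = 4 * (p * p * p) - 4 * (p * p) + p := by noncomm_ring
    rw [this, hp_idem, hp_idem]; simp
  have h2p : ∀ m : A, l * m = 1 → 2 * (l * p * m) - 1 = l * (2 * p - 1) * m := by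
    intro m hm
    have : l * (2 * p - 1) * m = 2 * (l * p * m) - l * m := by noncomm_ring
    rw [this, hm]
  have hh := h2p _ h1
  refine ⟨Ring.inverse l, h1, h2, ?_, ?_⟩
  · generalize 2 * p - 1 = e at *
    have hm : star (Ring.inverse l) = Ring.inverse l := by
      rw [← hl]; simp [hes, hls, mul_assoc]
    have a1 : e * Ring.inverse l = l * e := by
      rw [← hl]; simp only [← mul_assoc]; rw [hee, one_mul]
    have a2 : l * e = e * Ring.inverse l := a1.symm
    have a3 : e * l = Ring.inverse l * e := by
      rw [← hl, mul_assoc _ e e, hee, mul_one]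
    rw [star_mul, star_mul, hm, hls, ← hp_star]
    calc e * (Ring.inverse l * (p * l)) * e = (e * Ring.inverse l) * p * (l * e) := by
          simp only [mul_assoc]
      _ = l * (e * p * e) * Ring.inverse l := by
          rw [a1, a2]; rw [← a2]; simp only [mul_assoc]; rw [a2]
      _ = _ := by rw [hepe]
  · rw [hh]
    generalize 2 * p - 1 = e at *
    rw [← hl]
    calc l * e * (e * l * e) * e = l * (e * e) * l * (e * e) := by simp only [mul_assoc]
      _ = l * l := by rw [hee]; simp

/-- the map `λ ↦ [λp]` from the positive `ε`-unitaries to the projective space is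
injective. -/
theorem stmt_15 {A : Type*} [CStarAlgebra A] [PartialOrder A] [StarOrderedRing A]
    (p : A) (hp_star : p = star p) (hp_idem : p * p = p)
    (lam mu : A) (hl_pos : 0 ≤ lam) (hl_u : IsUnit lam)
    (hm_pos : 0 ≤ mu) (hm_u : IsUnit mu)
    (hl_eps : (2 * p - 1) * lam * (2 * p - 1) = Ring.inverse lam)
    (hm_eps : (2 * p - 1) * mu * (2 * p - 1) = Ring.inverse mu)
    (h : ∃ h : A, h = p * h * p ∧ (∃ k : A, k = p * k * p ∧ h * k = p ∧ k * h = p) ∧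
      (lam * p) * h = mu * p) :
    lam = mu := by
  obtain ⟨h, hh, ⟨k, hk, hhk, hkh⟩, heq⟩ := h
  obtain ⟨l', l1, l2, l3, l4⟩ := aux_15 p hp_star hp_idem lam hl_pos hl_u hl_eps
  obtain ⟨m', m1, m2, m3, m4⟩ := aux_15 p hp_star hp_idem mu hm_pos hm_u hm_eps
  have hee : (2 * p - 1) * (2 * p - 1) = 1 := by
    have : (2 * p - 1) * (2 * p - 1) = 4 * (p * p) - 4 * p + 1 := by noncomm_ring
    rw [this, hp_idem]; simp
  have heq2 : mu * p * k = lam * p := by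
    rw [← heq, mul_assoc _ h k, hhk, mul_assoc, hp_idem]
  have FE : (mu * p * m') * (lam * p * l') = lam * p * l' := by
    rw [← heq2]
    calc (mu * p * m') * (mu * p * k * l') = mu * (p * (m' * mu) * p) * k * l' := by
          simp only [mul_assoc]
      _ = _ := by rw [m2, mul_one, hp_idem]
  have EF : (lam * p * l') * (mu * p * m') = mu * p * m' := by
    rw [← heq]
    calc (lam * p * l') * (lam * p * h * m') = lam * (p * (l' * lam) * p) * h * m' := by
          simp only [mul_assoc]
      _ = _ := by rw [l2, mul_one, hp_idem]
  have key : lam * p * l' = mu * p * m' := by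
    generalize lam * p * l' = E at *
    generalize mu * p * m' = F at *
    generalize 2 * p - 1 = e at *
    rw [← EF]
    calc E = e * star (F * E) * e := by rw [FE, l3]
      _ = e * star E * 1 * star F * e := by rw [star_mul]; simp only [mul_assoc, one_mul]
      _ = (e * star E * e) * (e * star F * e) := by rw [← hee]; simp only [mul_assoc]
      _ = E * F := by rw [l3, m3]
  have sq : lam * lam = mu * mu := by rw [← l4, ← m4, key]
  rw [← CFC.sqrt_mul_self lam hl_pos, sq, CFC.sqrt_mul_self mu hm_pos]
end

section
/- Let v ∈ A satisfy v = vp, v*εv = p (where ε = 2p − 1), and suppose pvp is invertible in the corner algebra pAp. Then there exists an ε-unitary u ∈ A (u invertible, u*εu = ε) with v = up. (Equivalently, K'_p(A) = U_ε(A)·p.) -/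
set_option linter.unusedSimpArgs false

theorem exists_sqrt_aux {A : Type*} [CStarAlgebra A] (p b : A) (hp : star p = p)
    (hpb : p * b = 0) :
    ∃ s : A, star s = s ∧ s * s = 1 + b * star b ∧ s * p = p * s := by
  let : PartialOrder A := CStarAlgebra.spectralOrder A
  have : StarOrderedRing A := CStarAlgebra.spectralOrderedRing A
  have h0 : (0 : A) ≤ 1 + b * star b :=
    add_nonneg zero_le_one (mul_star_self_nonneg b)
  refine ⟨CFC.sqrt (1 + b * star b), ?_, CFC.sqrt_mul_sqrt_self _ h0, ?_⟩
  · exact (IsSelfAdjoint.of_nonneg (CFC.sqrt_nonneg _)).star_eq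
  · have hbp : star b * p = 0 := by
      have := congrArg star hpb
      simpa [hp] using this
    have hc : Commute (1 + b * star b) p := by
      show _ = _
      simp only [add_mul, mul_add, mul_assoc, hbp, one_mul, mul_one, mul_zero]
      simp only [← mul_assoc, hpb, zero_mul]
    have : Commute (CFC.sqrt (1 + b * star b)) p := by
      rw [CFC.sqrt_eq_cfc]
      exact hc.cfc_nnreal _
    exact this

theorem stmt_16 {A : Type*} [CStarAlgebra A]
    (p : A) (hp_star : p = star p) (hp_idem : p * p = p)
    (v : A) (hv : v = v * p) (hve : star v * (2 * p - 1) * v = p)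
    (hinv : ∃ k : A, k = p * k * p ∧ (p * v * p) * k = p ∧ k * (p * v * p) = p) :
    ∃ u : A, IsUnit u ∧ star u * (2 * p - 1) * u = 2 * p - 1 ∧ v = u * p := by
  obtain ⟨k, hk, hak, hka⟩ := hinv
  have ps : star p = p := hp_star.symm
  obtain ⟨a, ha⟩ : ∃ a, a = p * v := ⟨_, rfl⟩
  obtain ⟨b, hb⟩ : ∃ b, b = v - p * v := ⟨_, rfl⟩
  have hvab : v = a + b := by rw [ha, hb]; abel
  have pa : p * a = a := by rw [ha, ← mul_assoc, hp_idem]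
  have ap : a * p = a := by rw [ha, mul_assoc, ← hv]
  have pb : p * b = 0 := by rw [hb, mul_sub, ← mul_assoc, hp_idem, sub_self]
  have bp : b * p = b := by rw [hb, sub_mul, mul_assoc, ← hv]
  have pk : p * k = k := by rw [hk]; simp only [← mul_assoc, hp_idem]
  have kp : k * p = k := by rw [hk]; simp only [mul_assoc, hp_idem]
  rw [← ha, ap] at hak hka
  obtain ⟨s, ss, s2, sp⟩ := exists_sqrt_aux p b ps pb
  obtain ⟨a', ea⟩ : ∃ x, star a = x := ⟨_, rfl⟩
  obtain ⟨b', eb⟩ : ∃ x, star b = x := ⟨_, rfl⟩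
  obtain ⟨k', ek⟩ : ∃ x, star k = x := ⟨_, rfl⟩
  have ea' : star a' = a := by rw [← ea, star_star]
  have eb' : star b' = b := by rw [← eb, star_star]
  have ek' : star k' = k := by rw [← ek, star_star]
  have ap' : a' * p = a' := by simpa [ps, ea] using congrArg star pa
  have pa' : p * a' = a' := by simpa [ps, ea] using congrArg star ap
  have bp' : b' * p = 0 := by simpa [ps, eb] using congrArg star pb
  have pb' : p * b' = b' := by simpa [ps, eb] using congrArg star bp
  have kp' : k' * p = k' := by simpa [ps, ek] using congrArg star pk
  have pk' : p * k' = k' := by simpa [ps, ek] using congrArg star kp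
  have hka' : k' * a' = p := by simpa [ps, ek, ea] using congrArg star hak
  have hak' : a' * k' = p := by simpa [ps, ek, ea] using congrArg star hka
  have L : ∀ {x y z : A}, x * y = z → ∀ t, x * (y * t) = z * t := by
    intro x y z h t; rw [← mul_assoc, h]
  have bb : b' * b = a' * a - p := by
    rw [hvab] at hve
    simp only [star_add, ea, eb, two_mul, mul_add, add_mul, mul_sub, sub_mul, mul_one, one_mul,
      mul_assoc, pa, pb, ap, bp, L ap', L bp', zero_mul, mul_zero] at hve
    have ab : a' * b = 0 := by rw [← ap', mul_assoc, pb, mul_zero]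
    have ba : b' * a = 0 := by rw [← pa, ← mul_assoc, bp', zero_mul]
    simp only [ab, ba] at hve
    rw [← hve]
    abel
  have ab : a' * b = 0 := by rw [← ap', mul_assoc, pb, mul_zero]
  have ba : b' * a = 0 := by rw [← pa, ← mul_assoc, bp', zero_mul]
  have kb : k' * b = 0 := by rw [← kp', mul_assoc, pb, mul_zero]
  have bk : b' * k = 0 := by rw [← pk, ← mul_assoc, bp', zero_mul]
  have ba' : b' * k' = 0 := by rw [← pk', ← mul_assoc, bp', zero_mul]
  have kb' : k * b = 0 := by rw [← kp, mul_assoc, pb, mul_zero]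
  rw [eb] at s2
  obtain ⟨T, hT⟩ : ∃ T, T = 1 - b * (k * (k' * b')) := ⟨_, rfl⟩
  have TS : T * (s * s) = 1 := by
    rw [s2, hT]
    simp only [mul_add, sub_mul, mul_one, one_mul, mul_assoc, L bb, mul_sub, L hka', pa, L pa, L pb', L hka,
      pb', L kp']
    abel
  have ST : (s * s) * T = 1 := by
    rw [s2, hT]
    simp only [add_mul, mul_sub, mul_one, one_mul, mul_assoc, L bb, sub_mul, L hak, L pk', L pk,
      L hak', L hak, pb', L pb']
    abel
  have Ts : T * s = s * T := by
    calc T * s = T * s * ((s * s) * T) := by rw [ST, mul_one]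
      _ = (T * (s * s)) * (s * T) := by simp only [mul_assoc]
      _ = s * T := by rw [TS, one_mul]
  have sTs : s * (b * (k * (k' * (b' * s)))) = b * b' := by
    have h1 : s * (T * s) = 1 := by rw [Ts, ← mul_assoc, ST]
    rw [hT] at h1
    simp only [sub_mul, mul_sub, one_mul, mul_assoc, s2] at h1
    rw [sub_eq_iff_eq_add] at h1
    exact (add_left_cancel h1).symm
  have P1 : ∀ {x : A}, p * x = x → p * (s * x) = s * x := by
    intro x h; rw [← mul_assoc, ← sp, mul_assoc, h]
  have P0 : ∀ {x : A}, p * x = 0 → p * (s * x) = 0 := by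
    intro x h; rw [← mul_assoc, ← sp, mul_assoc, h, mul_zero]
  have B : ∀ {x : A}, p * x = x → b' * (s * x) = 0 := by
    intro x h; rw [← P1 h, ← mul_assoc, bp', zero_mul]
  have D : ∀ {x : A}, x * p = x → ∀ t, x * (s * (b * t)) = 0 := by
    intro x h t; rw [← h, mul_assoc, P0, mul_zero]
    rw [← mul_assoc, pb, zero_mul]
  have P3 : p * (s * (k' * (b' * s))) = s * (k' * (b' * s)) := P1 (L pk' _)
  have U1 : star (a + b + (k' * b' + 1 - p) * s) = a' + b' + s * (b * k + 1 - p) := by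
    simp only [star_add, star_sub, star_mul, star_one, ea, eb, ek', eb', ss, ps]
  have e2 : (2 * p - 1) * (2 * p - 1) = 1 := by
    simp only [two_mul, mul_sub, sub_mul, mul_add, add_mul, hp_idem, mul_one, one_mul]
    abel
  have hL : (a' + b' + s * (b * k + 1 - p)) * (2 * p - 1) * (a + b + (k' * b' + 1 - p) * s)
      = 2 * p - 1 := by
    simp only [two_mul, mul_sub, sub_mul, mul_add, add_mul, hp_idem, mul_one, one_mul, mul_assoc,
      L hp_idem, pa, L pa, pb, L pb, pa', L pa', pb', L pb', pk, L pk, pk', L pk', ap, L ap, bp,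
      L bp, kp, L kp, ap', L ap', bp', L bp', kp', L kp', hak, L hak, hka, L hka, hak', L hak',
      hka', L hka', bb, L bb, ab, L ab, ba, L ba, kb, L kb, bk, L bk, ba', L ba', kb', L kb', sp, L sp, P1 pa, P1 pa', P1 pb', P0 pb, P3, B pa, B pa', B pb', D ap, D bp, s2, L s2, sTs, mul_zero, zero_mul, add_zero, sub_zero]
    abel
  have hR : (a + b + (k' * b' + 1 - p) * s) * (2 * p - 1) * (a' + b' + s * (b * k + 1 - p))
      = 2 * p - 1 := by
    simp only [two_mul, mul_sub, sub_mul, mul_add, add_mul, hp_idem, mul_one, one_mul, mul_assoc,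
      L hp_idem, pa, L pa, pb, L pb, pa', L pa', pb', L pb', pk, L pk, pk', L pk', ap, L ap, bp,
      L bp, kp, L kp, ap', L ap', bp', L bp', kp', L kp', hak, L hak, hka, L hka, hak', L hak',
      hka', L hka', bb, L bb, ab, L ab, ba, L ba, kb, L kb, bk, L bk, ba', L ba', kb', L kb', sp, L sp, P1 pa, P1 pa', P1 pb', P0 pb, P3, B pa, B pa', B pb', D ap, D bp, s2, L s2, mul_zero, zero_mul, add_zero, sub_zero]
    abel
  refine ⟨a + b + (k' * b' + 1 - p) * s, ?_, ?_, ?_⟩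
  · refine ⟨⟨_, (2 * p - 1) * (a' + b' + s * (b * k + 1 - p)) * (2 * p - 1), ?_, ?_⟩, rfl⟩
    · rw [← mul_assoc, ← mul_assoc, hR, e2]
    · rw [mul_assoc, mul_assoc, ← mul_assoc _ (2 * p - 1), hL, e2]
  · rw [U1]; exact hL
  · rw [hvab]
    simp only [add_mul, sub_mul, mul_assoc, ap, bp, sp, L bp', L hp_idem, one_mul, zero_mul,
      mul_zero]
    abel
end

section
/- Let λ, μ ∈ A be positive invertible elements with ελε = λ^{-1} and εμε = μ^{-1}, where ε = 2p − 1. Then ‖(1−p)λμ^{-1}p‖ = ‖(1−p)μλ^{-1}p‖. (The function ρ defining the pseudo-chordal metric on the disc D⁺ is symmetric.) -/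
theorem aux_le {A : Type*} [CStarAlgebra A] [PartialOrder A] [StarOrderedRing A]
    (x y : A) (hx : 0 ≤ x) (h : ‖1 + x‖ ≤ ‖1 + y‖) : ‖x‖ ≤ ‖y‖ := by
  rcases subsingleton_or_nontrivial A with hA | hA
  · simp [Subsingleton.elim x y]
  have h1 : ‖1 + x‖ ≤ 1 + ‖y‖ := h.trans ((norm_add_le _ _).trans (by simp))
  have h2 : (0 : A) ≤ 1 + x := add_nonneg zero_le_one hx
  have h3 := (CStarAlgebra.norm_le_iff_le_algebraMap (1 + x) (by positivity) h2).1 h1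
  refine (CStarAlgebra.norm_le_iff_le_algebraMap x (by positivity) hx).2 ?_
  rw [map_add, map_one] at h3
  exact (add_le_add_iff_left _).1 h3

theorem aux_id {A : Type*} [Ring A] (p l n : A) (hp : p * p = p)
    (hl : l * (2 * p - 1) * l = 2 * p - 1) (hn : n * (2 * p - 1) * n = 2 * p - 1) :
    ((1 - p) + p * n * l * p) * ((1 - p) + p * l * n * p)
      = 1 + (p * n * l * (1 - p)) * ((1 - p) * l * n * p) := by
  have hq : (1 - p) * (1 - p) = 1 - p := by simp [mul_sub, sub_mul, hp]
  have hqp : (1 - p) * p = 0 := by simp [sub_mul, hp]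
  have hpq : p * (1 - p) = 0 := by simp [mul_sub, hp]
  have e1 : ((1 - p) + p * n * l * p) * ((1 - p) + p * l * n * p)
      = (1 - p) * (1 - p) + ((1 - p) * p) * (l * n * p) + p * n * l * (p * (1 - p))
        + p * n * l * (p * p) * l * n * p := by noncomm_ring
  have e2 : (p * n * l * (1 - p)) * ((1 - p) * l * n * p)
      = p * n * l * ((1 - p) * (1 - p)) * l * n * p := by noncomm_ring
  have e3 : p * n * l * p * l * n * p - p * n * l * (1 - p) * l * n * p
      = p * (n * (l * (2 * p - 1) * l) * n) * p := by noncomm_ring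
  have e4 : p * (2 * p - 1) * p = p := by
    have : p * (2 * p - 1) * p = 2 * (p * p * p) - p * p := by noncomm_ring
    rw [this, hp, hp]; noncomm_ring
  rw [hl, hn, e4] at e3
  rw [e1, e2, hq, hqp, hpq, hp, sub_eq_iff_eq_add.1 e3]
  noncomm_ring

/-- the function `ρ` defining the pseudo-chordal metric is symmetric:
`‖(1−p)λμ⁻¹p‖ = ‖(1−p)μλ⁻¹p‖` for positive `ε`-unitaries `λ, μ`. -/
theorem stmt_17 {A : Type*} [CStarAlgebra A] [PartialOrder A] [StarOrderedRing A]
    (p : A) (hp_star : p = star p) (hp_idem : p * p = p)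
    (lam mu : A) (hl_pos : 0 ≤ lam) (hl_u : IsUnit lam)
    (hm_pos : 0 ≤ mu) (hm_u : IsUnit mu)
    (hl_eps : (2 * p - 1) * lam * (2 * p - 1) = Ring.inverse lam)
    (hm_eps : (2 * p - 1) * mu * (2 * p - 1) = Ring.inverse mu) :
    ‖(1 - p) * lam * Ring.inverse mu * p‖ = ‖(1 - p) * mu * Ring.inverse lam * p‖ := by
  have hee : (2 * p - 1) * (2 * p - 1) = 1 := by
    have : (2 * p - 1) * (2 * p - 1) = 4 * (p * p) - 4 * p + 1 := by noncomm_ring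
    rw [this, hp_idem]; noncomm_ring
  have hep : (2 * p - 1) * p = p := by
    have : (2 * p - 1) * p = 2 * (p * p) - p := by noncomm_ring
    rw [this, hp_idem]; noncomm_ring
  have hqe : (1 - p) * (2 * p - 1) = -(1 - p) := by
    have : (1 - p) * (2 * p - 1) = 3 * p - 2 * (p * p) - 1 := by noncomm_ring
    rw [this, hp_idem]; noncomm_ring
  have hsl : star lam = lam := (IsSelfAdjoint.of_nonneg hl_pos).star_eq
  have hsm : star mu = mu := (IsSelfAdjoint.of_nonneg hm_pos).star_eq
  have hll := Ring.mul_inverse_cancel lam hl_u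
  have hmm := Ring.inverse_mul_cancel mu hm_u
  have hse : star (2 * p - 1) = 2 * p - 1 := by
    rw [star_sub, star_mul, ← hp_star]; simp; noncomm_ring
  rw [← hl_eps] at hll ⊢
  have hmu : mu = (2 * p - 1) * Ring.inverse mu * (2 * p - 1) := by
    rw [← hm_eps]
    calc mu = ((2 * p - 1) * (2 * p - 1)) * mu * ((2 * p - 1) * (2 * p - 1)) := by simp [hee]
      _ = _ := by simp only [mul_assoc]
  have hsn : star (Ring.inverse mu) = Ring.inverse mu := by
    rw [← hm_eps]; simp only [star_mul, hse, hsm, mul_assoc]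
  generalize Ring.inverse mu = n at *
  have hl : lam * (2 * p - 1) * lam = 2 * p - 1 := by
    calc lam * (2 * p - 1) * lam = lam * (2 * p - 1) * lam * ((2 * p - 1) * (2 * p - 1)) := by
          rw [hee, mul_one]
      _ = (lam * ((2 * p - 1) * lam * (2 * p - 1))) * (2 * p - 1) := by simp only [mul_assoc]
      _ = _ := by rw [hll, one_mul]
  have hn : n * (2 * p - 1) * n = 2 * p - 1 := by
    rw [hmu] at hmm
    calc n * (2 * p - 1) * n = n * (2 * p - 1) * n * ((2 * p - 1) * (2 * p - 1)) := by
          rw [hee, mul_one]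
      _ = (n * ((2 * p - 1) * n * (2 * p - 1))) * (2 * p - 1) := by simp only [mul_assoc]
      _ = _ := by rw [hmm, one_mul]
  have hR : (1 - p) * mu * ((2 * p - 1) * lam * (2 * p - 1)) * p = -((1 - p) * n * lam * p) := by
    calc _ = ((1 - p) * (2 * p - 1)) * n * ((2 * p - 1) * (2 * p - 1)) * lam
            * ((2 * p - 1) * p) := by rw [hmu]; simp only [mul_assoc]
      _ = _ := by rw [hqe, hee, hep]; simp only [neg_mul, mul_one]
  rw [hR, norm_neg]
  have i1 := aux_id p lam n hp_idem hl hn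
  have i2 := aux_id p n lam hp_idem hn hl
  have s1 : star ((1 - p) * lam * n * p) = p * n * lam * (1 - p) := by
    simp only [star_mul, star_sub, star_one, ← hp_star, hsl, hsn, mul_assoc]
  have s2 : star ((1 - p) * n * lam * p) = p * lam * n * (1 - p) := by
    simp only [star_mul, star_sub, star_one, ← hp_star, hsl, hsn, mul_assoc]
  have s3 : star ((1 - p) + p * lam * n * p) = (1 - p) + p * n * lam * p := by
    simp only [star_add, star_mul, star_sub, star_one, ← hp_star, hsl, hsn, mul_assoc]
  rw [← s1, ← s3] at i1
  rw [← s2, ← s3] at i2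
  have key : ‖1 + star ((1 - p) * lam * n * p) * ((1 - p) * lam * n * p)‖
      = ‖1 + star ((1 - p) * n * lam * p) * ((1 - p) * n * lam * p)‖ := by
    rw [← i1, ← i2, CStarRing.norm_star_mul_self, CStarRing.norm_self_mul_star]
  have k1 := aux_le _ _ (star_mul_self_nonneg _) key.le
  have k2 := aux_le _ _ (star_mul_self_nonneg _) key.ge
  have k := le_antisymm k1 k2
  rw [CStarRing.norm_star_mul_self, CStarRing.norm_star_mul_self] at k
  exact (mul_self_inj (norm_nonneg _) (norm_nonneg _)).1 k
end

section
/- Let λ ∈ A be a positive invertible element with ελε = λ^{-1}, where ε = 2p − 1. Then pλp is invertible in the corner algebra pAp and, with c denoting its inverse in pAp, ‖(1−p)λp · c‖ = tanh(‖log λ‖), where log λ is defined by continuous functional calculus. (Concrete form of the identity 2·E_n(m,[p]) = d₊(m,[p]) relating the non-Euclidean metric of the disc D⁺ to the geodesic metric of the positive ε-unitaries.) -/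
lemma aux_two_cancel {A : Type*} [CStarAlgebra A] {a b : A} (h : 2 * a = 2 * b) : a = b := by
  have h2 : (2 : ℝ) • a = (2 : ℝ) • b := by
    simpa [two_smul, two_mul] using h
  exact smul_right_injective A (two_ne_zero : (2 : ℝ) ≠ 0) h2

lemma aux_tanh_mono : Monotone Real.tanh := by
  intro a b hab
  by_contra hlt
  push Not at hlt
  have h := (Real.artanh_lt_artanh (Real.neg_one_lt_tanh b) (Real.tanh_lt_one a) hlt)
  rw [Real.artanh_tanh, Real.artanh_tanh] at h
  linarith

lemma aux_abs_tanh (x : ℝ) : |Real.tanh x| = Real.tanh |x| := by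
  have h0 : ∀ y : ℝ, 0 ≤ y → 0 ≤ Real.tanh y := fun y hy => by
    simpa using aux_tanh_mono hy
  rcases le_total 0 x with h | h
  · rw [abs_of_nonneg h, abs_of_nonneg (h0 x h)]
  · rw [abs_of_nonpos h, Real.tanh_neg, abs_of_nonpos]
    have := h0 (-x) (by linarith)
    rw [Real.tanh_neg] at this
    linarith

lemma aux_cont_tanh : Continuous Real.tanh := by
  have : Real.tanh = fun x => Real.sinh x / Real.cosh x := by
    ext x; exact Real.tanh_eq_sinh_div_cosh x
  rw [this]
  exact Real.continuous_sinh.div Real.continuous_cosh fun x => (Real.cosh_pos x).ne'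

lemma aux_norm_tanh {A : Type*} [CStarAlgebra A] (X : A) (hX : IsSelfAdjoint X) :
    ‖cfc Real.tanh X‖ = Real.tanh ‖X‖ := by
  rcases subsingleton_or_nontrivial A with _ | _
  · simp [Subsingleton.elim X 0, Subsingleton.elim (cfc Real.tanh (0 : A)) 0]
  have hg := IsGreatest.norm_cfc (id : ℝ → ℝ) X
  rw [cfc_id ℝ X] at hg
  obtain ⟨x, hx, hxe⟩ := hg.1
  apply le_antisymm
  · apply norm_cfc_le
    · simpa using aux_tanh_mono (norm_nonneg X)
    · intro y hy
      rw [Real.norm_eq_abs, aux_abs_tanh]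
      exact aux_tanh_mono (hg.2 ⟨y, hy, rfl⟩)
  · have := norm_apply_le_norm_cfc Real.tanh X hx aux_cont_tanh.continuousOn
    rw [Real.norm_eq_abs, aux_abs_tanh] at this
    rw [← hxe]
    exact this

/-- off-diagonal self-adjoint elements -/
lemma aux_norm_offdiag {A : Type*} [CStarAlgebra A] [PartialOrder A] [StarOrderedRing A]
    (p T : A) (hp : p = star p) (hpp : p * p = p) (hT : IsSelfAdjoint T)
    (h : p * T + T * p = T) : ‖T * p‖ = ‖T‖ := by
  have hTs : star T = T := hT
  have h1 : T * p = (1 - p) * T := by rw [sub_mul, one_mul]; nth_rw 2 [← h]; abel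
  have h2 : T * (1 - p) = p * T := by rw [mul_sub, mul_one]; nth_rw 1 [← h]; abel
  set r := ‖T * p‖ with hr
  have hn : ‖T * (1 - p)‖ = r := by
    rw [h2, hr, ← norm_star (T * p), star_mul, hTs, ← hp]
  have hq : IsSelfAdjoint (1 - p) := by
    simp [IsSelfAdjoint, ← hp]
  have hqq : (1 - p) * (1 - p) = 1 - p := by
    simp [mul_sub, sub_mul, hpp]
  have key : ∀ e : A, IsSelfAdjoint e → e * e = e → ‖T * e‖ = r →
      e * (T * T) * e ≤ (r ^ 2) • e := by
    intro e he hee hne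
    have hse : star e = e := he
    have := CStarAlgebra.star_mul_le_algebraMap_norm_sq (a := T * e)
    have := he.conjugate_le_conjugate this
    rw [hne, star_mul, hTs, hse, Algebra.algebraMap_eq_smul_one, mul_smul_comm, mul_one,
      smul_mul_assoc, hee] at this
    calc e * (T * T) * e = (e * e) * T * T * (e * e) := by rw [hee]; simp only [mul_assoc]
      _ = e * (e * T * (T * e)) * e := by simp only [mul_assoc]
      _ ≤ _ := this
  have k1 := key p hp.symm hpp rfl
  have k2 := key (1 - p) hq hqq hn
  have hsum : p * (T * T) * p + (1 - p) * (T * T) * (1 - p) = T * T := by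
    have e1 : p * (T * T) * p = T * T * p := by
      calc p * (T * T) * p = (p * T) * (T * p) := by simp only [mul_assoc]
        _ = T * ((1 - p) * (1 - p)) * T := by rw [← h2, h1]; simp only [mul_assoc]
        _ = T * (T * p) := by rw [hqq, h1]; simp only [mul_assoc]
        _ = _ := by simp only [mul_assoc]
    have e2 : (1 - p) * (T * T) * (1 - p) = T * T * (1 - p) := by
      calc (1 - p) * (T * T) * (1 - p) = ((1 - p) * T) * (T * (1 - p)) := by simp only [mul_assoc]
        _ = T * (p * p) * T := by rw [← h1, h2]; simp only [mul_assoc]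
        _ = T * (T * (1 - p)) := by rw [hpp, h2]; simp only [mul_assoc]
        _ = _ := by simp only [mul_assoc]
    rw [e1, e2]; noncomm_ring
  have hle : T * T ≤ algebraMap ℝ A (r ^ 2) := by
    calc T * T = _ := hsum.symm
      _ ≤ (r ^ 2) • p + (r ^ 2) • (1 - p) := add_le_add k1 k2
      _ = _ := by rw [← smul_add, Algebra.algebraMap_eq_smul_one]; simp
  have hnn : 0 ≤ T * T := by
    have := star_mul_self_nonneg T
    rwa [hTs] at this
  have hTT : ‖T * T‖ = ‖T‖ * ‖T‖ := by
    have := CStarRing.norm_star_mul_self (x := T)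
    rwa [hTs] at this
  have hr0 : 0 ≤ r := norm_nonneg _
  have h3 := (CStarAlgebra.norm_le_iff_le_algebraMap (T * T) (sq_nonneg r) hnn).2 hle
  have h4 : ‖T‖ ≤ r := by
    rw [hTT, ← sq] at h3
    exact (sq_le_sq₀ (norm_nonneg _) hr0).1 h3
  refine le_antisymm ?_ h4
  have h5 : r * r ≤ ‖T‖ * ‖T‖ := by
    have e : star (T * p) * (T * p) ≤ algebraMap ℝ A (‖T‖ ^ 2) := by
      have a1 := CStarAlgebra.star_mul_le_algebraMap_norm_sq (a := T)
      have a2 := star_left_conjugate_le_conjugate a1 p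
      have a3 : p ≤ 1 := by
        have := star_mul_self_nonneg (1 - p)
        rw [hq.star_eq, hqq] at this
        exact sub_nonneg.1 this
      rw [← hp, Algebra.algebraMap_eq_smul_one, mul_smul_comm, mul_one, smul_mul_assoc, hpp] at a2
      calc star (T * p) * (T * p) = p * (star T * T) * p := by
            rw [star_mul, ← hp]; simp only [mul_assoc]
        _ ≤ ‖T‖ ^ 2 • p := a2
        _ ≤ ‖T‖ ^ 2 • 1 := smul_le_smul_of_nonneg_left a3 (sq_nonneg _)
        _ = _ := (Algebra.algebraMap_eq_smul_one _).symm
    have := (CStarAlgebra.norm_le_iff_le_algebraMap _ (sq_nonneg ‖T‖)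
      (star_mul_self_nonneg (T * p))).2 e
    rwa [CStarRing.norm_star_mul_self, sq] at this
  exact (mul_self_le_mul_self_iff hr0 (norm_nonneg _)).2 h5

/-- for a positive `ε`-unitary `λ`, `pλp` is invertible in `pAp` and, with `c` its
inverse in `pAp`, `‖(1−p)λp·c‖ = tanh ‖log λ‖`. -/
theorem stmt_18 {A : Type*} [CStarAlgebra A] [PartialOrder A] [StarOrderedRing A]
    (p : A) (hp_star : p = star p) (hp_idem : p * p = p)
    (lam : A) (hl_pos : 0 ≤ lam) (hl_u : IsUnit lam)
    (hl_eps : (2 * p - 1) * lam * (2 * p - 1) = Ring.inverse lam) :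
    ∃ c : A, c = p * c * p ∧ (p * lam * p) * c = p ∧ c * (p * lam * p) = p ∧
      ‖(1 - p) * lam * p * c‖ = Real.tanh ‖CFC.log lam‖ := by
  set X := CFC.log lam with hXdef
  have hX : IsSelfAdjoint X := IsSelfAdjoint.log
  have hexp : cfc Real.exp X = lam := by
    rw [CFC.real_exp_eq_normedSpace_exp hX]
    exact CFC.exp_log lam (hl_u.isStrictlyPositive hl_pos)
  have cc : ContinuousOn Real.cosh (spectrum ℝ X) := Real.continuous_cosh.continuousOn
  have cs : ContinuousOn Real.sinh (spectrum ℝ X) := Real.continuous_sinh.continuousOn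
  have cd : ContinuousOn (fun x => (Real.cosh x)⁻¹) (spectrum ℝ X) :=
    (Real.continuous_cosh.inv₀ fun x => (Real.cosh_pos x).ne').continuousOn
  obtain ⟨C, hC⟩ : ∃ C, C = cfc Real.cosh X := ⟨_, rfl⟩
  obtain ⟨S, hS⟩ : ∃ S, S = cfc Real.sinh X := ⟨_, rfl⟩
  obtain ⟨D, hD⟩ : ∃ D, D = cfc (fun x => (Real.cosh x)⁻¹) X := ⟨_, rfl⟩
  obtain ⟨T, hT⟩ : ∃ T, T = cfc Real.tanh X := ⟨_, rfl⟩
  have hlam : lam = C + S := by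
    rw [← hexp, hC, hS, ← cfc_add ..]
    congr 1; ext x; exact (Real.cosh_add_sinh x).symm
  have hone : cfc (fun _ : ℝ => (1 : ℝ)) X = 1 := cfc_const_one ℝ X
  have hCD : C * D = 1 := by
    rw [hC, hD, ← cfc_mul _ _ X cc cd, ← hone]
    congr 1; ext x; exact mul_inv_cancel₀ (Real.cosh_pos x).ne'
  have hDC : D * C = 1 := by
    rw [hC, hD, ← cfc_mul _ _ X cd cc, ← hone]
    congr 1; ext x; exact inv_mul_cancel₀ (Real.cosh_pos x).ne'
  have hSD : S * D = T := by
    rw [hS, hD, hT, ← cfc_mul _ _ X cs cd]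
    congr 1; ext x; rw [Real.tanh_eq_sinh_div_cosh, div_eq_mul_inv]
  have hmu : lam * (C - S) = 1 := by
    rw [hlam, hC, hS, ← cfc_add .., ← cfc_sub .., ← cfc_mul .., ← hone]
    congr 1; ext x
    rw [Real.cosh_add_sinh, Real.cosh_sub_sinh, ← Real.exp_add]; simp
  have hinv : Ring.inverse lam = C - S := by
    calc Ring.inverse lam = Ring.inverse lam * (lam * (C - S)) := by rw [hmu, mul_one]
      _ = _ := by rw [← mul_assoc, Ring.inverse_mul_cancel _ hl_u, one_mul]
  rw [hinv, hlam] at hl_eps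
  have hee : (2 * p - 1) * (2 * p - 1) = 1 := by
    have : (2 * p - 1) * (2 * p - 1) = 4 * (p * p) - 4 * p + 1 := by noncomm_ring
    rw [this, hp_idem]; simp
  obtain ⟨e, he⟩ : ∃ e, e = 2 * p - 1 := ⟨_, rfl⟩
  rw [← he] at hl_eps hee
  have h2 : e * (C - S) * e = C + S := by
    rw [← hl_eps]
    calc e * (e * (C + S) * e) * e = (e * e) * (C + S) * (e * e) := by simp only [mul_assoc]
      _ = _ := by rw [hee]; simp
  have heC : e * C * e = C := by
    apply aux_two_cancel
    calc 2 * (e * C * e) = e * (C + S) * e + e * (C - S) * e := by noncomm_ring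
      _ = _ := by rw [hl_eps, h2]; noncomm_ring
  have heS : e * S * e = - S := by
    apply aux_two_cancel
    calc 2 * (e * S * e) = e * (C + S) * e - e * (C - S) * e := by noncomm_ring
      _ = _ := by rw [hl_eps, h2]; noncomm_ring
  have heC' : e * C = C * e := by
    calc e * C = e * C * (e * e) := by rw [hee, mul_one]
      _ = (e * C * e) * e := by simp only [mul_assoc]
      _ = _ := by rw [heC]
  have heS' : e * S = - (S * e) := by
    calc e * S = e * S * (e * e) := by rw [hee, mul_one]
      _ = (e * S * e) * e := by simp only [mul_assoc]
      _ = _ := by rw [heS, neg_mul]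
  have hpC : p * C = C * p := by
    apply aux_two_cancel
    have : 2 * (p * C) = e * C + C := by rw [he]; noncomm_ring
    rw [this, heC', he]; noncomm_ring
  have hpS : p * S + S * p = S := by
    apply aux_two_cancel
    have : 2 * (p * S + S * p) = e * S + S + 2 * (S * p) := by rw [he]; noncomm_ring
    rw [this, heS', he]; noncomm_ring
  have hpD : p * D = D * p := by
    calc p * D = D * C * p * D := by rw [hDC, one_mul]
      _ = D * (C * p) * D := by simp only [mul_assoc]
      _ = D * p * (C * D) := by rw [← hpC]; simp only [mul_assoc]
      _ = _ := by rw [hCD, mul_one]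
  have hpSp : p * S * p = 0 := by
    have h := congrArg (fun z => z * p) hpS
    simp only [add_mul] at h
    rw [mul_assoc S p p, hp_idem] at h
    simpa using h
  have hplp : p * lam * p = C * p := by
    rw [hlam, mul_add, add_mul, hpSp, add_zero, hpC, mul_assoc, hp_idem]
  refine ⟨p * D, ?_, ?_, ?_, ?_⟩
  · rw [← mul_assoc, hp_idem, mul_assoc, ← hpD, ← mul_assoc, hp_idem]
  · rw [hplp, ← mul_assoc, mul_assoc C, hp_idem, ← hpC, mul_assoc, hCD, mul_one]
  · rw [hplp, hpD, ← hpC, ← mul_assoc, mul_assoc D, hp_idem, mul_assoc, hpC, ← mul_assoc, hDC,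
      one_mul]
  · have hTp : p * T + T * p = T := by
      rw [← hSD, mul_assoc S D p, ← hpD, ← mul_assoc, ← mul_assoc, ← add_mul, hpS]
    have : (1 - p) * lam * p * (p * D) = T * p := by
      have e1 : (1 - p) * lam * p = S * p := by
        have : (1 - p) * lam * p = lam * p - p * lam * p := by noncomm_ring
        rw [this, hplp, hlam]; noncomm_ring
      rw [e1, ← mul_assoc, mul_assoc S, hp_idem, mul_assoc, hpD, ← mul_assoc, hSD]
    rw [this, aux_norm_offdiag p T hp_star hp_idem (hT ▸ cfc_predicate _ _) hTp, hT,
      aux_norm_tanh X hX]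
end

section
/- Let λ ∈ A be a positive invertible element with ελε = λ^{-1}, where ε = 2p − 1. Then ‖(1−p)λp‖ = sinh(‖log λ‖), where log λ is defined by continuous functional calculus. -/
lemma aux_offdiag {A : Type*} [CStarAlgebra A] [PartialOrder A] [StarOrderedRing A]
    (p b : A) (hp_star : p = star p) (hp_idem : p * p = p) (hbp : b * p = b) (hpb : p * b = 0) :
    ‖b + star b‖ = ‖b‖ := by
  have hpb' : star b * p = 0 := by
    have := congrArg star hpb
    rwa [star_mul, ← hp_star, star_zero] at this
  have hbp' : p * star b = star b := by
    have := congrArg star hbp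
    rwa [star_mul, ← hp_star] at this
  have hbb : b * b = 0 := by
    rw [← hbp, mul_assoc, ← mul_assoc p, hpb, zero_mul, mul_zero]
  have hbb' : star b * star b = 0 := by rw [← star_mul, hbb, star_zero]
  have hS : star (b + star b) * (b + star b) = star b * b + b * star b := by
    rw [star_add, star_star]
    simp only [add_mul, mul_add, hbb, hbb']
    abel
  have hn : ‖b + star b‖ ^ 2 = ‖star b * b + b * star b‖ := by
    rw [← hS, CStarRing.norm_star_mul_self, sq]
  refine le_antisymm ?_ ?_
  · refine le_of_pow_le_pow_left₀ two_ne_zero (norm_nonneg b) ?_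
    rw [hn]
    have h1 : star b * b ≤ algebraMap ℝ A (‖b‖ ^ 2) * p := by
      have := star_left_conjugate_le_conjugate
        (CStarAlgebra.star_mul_le_algebraMap_norm_sq (a := b)) p
      rw [← hp_star, ← mul_assoc, hbp', mul_assoc, hbp, ← Algebra.commutes, mul_assoc,
        hp_idem] at this
      exact this
    have h2 : b * star b ≤ algebraMap ℝ A (‖b‖ ^ 2) * (1 - p) := by
      have := star_left_conjugate_le_conjugate
        (CStarAlgebra.mul_star_le_algebraMap_norm_sq (a := b)) (1 - p)
      have e1 : star (1 - p) = 1 - p := by rw [star_sub, star_one, ← hp_star]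
      have e2 : (1 - p) * b = b := by rw [sub_mul, one_mul, hpb, sub_zero]
      have e3 : star b * (1 - p) = star b := by rw [mul_sub, mul_one, hpb', sub_zero]
      have e4 : (1 - p) * (1 - p) = 1 - p := by
        rw [sub_mul, one_mul, mul_sub, mul_one, hp_idem, sub_self, sub_zero]
      rw [e1, ← mul_assoc, e2, mul_assoc, e3, ← Algebra.commutes, mul_assoc, e4] at this
      exact this
    have h3 : star b * b + b * star b ≤ algebraMap ℝ A (‖b‖ ^ 2) := by
      refine (add_le_add h1 h2).trans_eq ?_
      rw [← mul_add, add_sub_cancel, mul_one]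
    have := CStarAlgebra.norm_le_norm_of_nonneg_of_le
      (add_nonneg (star_mul_self_nonneg b) (mul_star_self_nonneg b)) h3
    refine this.trans ?_
    obtain _ | _ := subsingleton_or_nontrivial A
    · rw [Subsingleton.elim (algebraMap ℝ A (‖b‖ ^ 2)) 0, norm_zero]; positivity
    · rw [norm_algebraMap', Real.norm_of_nonneg (by positivity)]
  · refine le_of_pow_le_pow_left₀ two_ne_zero (norm_nonneg _) ?_
    rw [hn, sq, ← CStarRing.norm_star_mul_self]
    exact CStarAlgebra.norm_le_norm_of_nonneg_of_le (star_mul_self_nonneg b)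
      (le_add_of_nonneg_right (mul_star_self_nonneg b))

lemma aux_sinh {A : Type*} [CStarAlgebra A] [PartialOrder A] [StarOrderedRing A] [Nontrivial A]
    (lam : A) (hl_pos : 0 ≤ lam) (hl_u : IsUnit lam) (S : A)
    (hS : lam - Ring.inverse lam = (2 : ℝ) • S) :
    ‖S‖ = Real.sinh ‖CFC.log lam‖ := by
  have hsa : IsSelfAdjoint lam := .of_nonneg hl_pos
  have h0 : ∀ x ∈ spectrum ℝ lam, x ≠ 0 := fun x hx h => by
    subst h
    exact spectrum.zero_notMem ℝ hl_u hx
  have hpos : ∀ x ∈ spectrum ℝ lam, 0 < x := fun x hx =>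
    lt_of_le_of_ne (spectrum_nonneg_of_nonneg hl_pos hx) (h0 x hx).symm
  have hci : ContinuousOn (fun x : ℝ => x⁻¹) (spectrum ℝ lam) :=
    continuousOn_inv₀.mono fun x hx => h0 x hx
  have hcl : ContinuousOn Real.log (spectrum ℝ lam) :=
    Real.continuousOn_log.mono fun x hx => h0 x hx
  have hinv : Ring.inverse lam = cfc (fun x : ℝ => x⁻¹) lam := by
    obtain ⟨u, rfl⟩ := hl_u
    rw [Ring.inverse_unit, cfc_inv_id u]
  have hS' : S = cfc (fun x : ℝ => Real.sinh (Real.log x)) lam := by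
    have e : cfc (fun x : ℝ => Real.sinh (Real.log x)) lam
        = cfc (fun x : ℝ => (2⁻¹ : ℝ) • (x - x⁻¹)) lam := by
      refine cfc_congr fun x hx => ?_
      simp only [Real.sinh_eq, Real.exp_neg, Real.exp_log (hpos x hx), smul_eq_mul]
      ring
    rw [e, cfc_smul (2⁻¹ : ℝ) (fun x : ℝ => x - x⁻¹) lam (continuousOn_id.sub hci),
      cfc_sub (fun x : ℝ => x) (fun x : ℝ => x⁻¹) lam continuousOn_id hci,
      ← hinv, cfc_id' ℝ lam, hS, smul_smul]
    norm_num
  have g1 := IsGreatest.norm_cfc (fun x : ℝ => Real.sinh (Real.log x)) lam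
    (Real.continuous_sinh.comp_continuousOn hcl) hsa
  have g2 := IsGreatest.norm_cfc Real.log lam hcl hsa
  rw [← hS'] at g1
  have g3 := Real.sinh_strictMono.monotone.map_isGreatest g2
  rw [Set.image_image] at g3
  have : (fun x => Real.sinh ‖Real.log x‖) '' spectrum ℝ lam
      = (fun x => ‖Real.sinh (Real.log x)‖) '' spectrum ℝ lam := by
    refine Set.image_congr fun x _ => ?_
    rw [Real.norm_eq_abs, Real.norm_eq_abs, Real.abs_sinh]
  rw [this] at g3
  exact g1.unique g3

/-- for a positive `ε`-unitary `λ`, `‖(1−p)λp‖ = sinh ‖log λ‖`. -/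
theorem stmt_19 {A : Type*} [CStarAlgebra A] [PartialOrder A] [StarOrderedRing A]
    (p : A) (hp_star : p = star p) (hp_idem : p * p = p)
    (lam : A) (hl_pos : 0 ≤ lam) (hl_u : IsUnit lam)
    (hl_eps : (2 * p - 1) * lam * (2 * p - 1) = Ring.inverse lam) :
    ‖(1 - p) * lam * p‖ = Real.sinh ‖CFC.log lam‖ := by
  obtain _ | _ := subsingleton_or_nontrivial A
  · rw [Subsingleton.elim ((1 - p) * lam * p) 0, Subsingleton.elim (CFC.log lam) 0]
    simp
  have hsa : star lam = lam := (IsSelfAdjoint.of_nonneg hl_pos).star_eq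
  rw [← aux_offdiag p ((1 - p) * lam * p) hp_star hp_idem (by rw [mul_assoc, hp_idem])
    (by rw [← mul_assoc, ← mul_assoc, mul_sub, mul_one, hp_idem, sub_self, zero_mul, zero_mul])]
  refine aux_sinh lam hl_pos hl_u _ ?_
  rw [← hl_eps]
  simp only [star_mul, star_sub, star_one, hsa, ← hp_star, two_smul]
  noncomm_ring
end
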